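/- arXiv:1407.3463 — 6 statements merged into one kernel-verified Lean document; each statement's English description precedes it below -/
import Mathlib

section
/- With A* = Σ_{i=1}^{r} ( δᵢ/(1+δᵢ²) ) ŵᵢ v̂ᵢᵀ as in the optimal rank-r posterior mean approximation, the minimum Bayes risk over rank-at-most-r matrices satisfies E[ ‖A* y − x‖²_{Γ_pos⁻¹} ] = E[ ‖A* y − μ_pos(y)‖²_{Γ_pos⁻¹} ] + E[ ‖μ_pos(y) − x‖²_{Γ_pos⁻¹} ] = Σ_{i>r} δᵢ² + n. -/
open Matrix MeasureTheory Finset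

/-- The density (w.r.t. Lebesgue measure on `ℝⁿ`) of the Gaussian measure `N(μ, Σ)`. -/
noncomputable def gaussianDensity {n : ℕ} (μ : Fin n → ℝ) (S : Matrix (Fin n) (Fin n) ℝ)
    (x : Fin n → ℝ) : ℝ :=
  (2 * Real.pi) ^ (-(n : ℝ) / 2) * S.det ^ (-(1:ℝ) / 2) *
    Real.exp (-(1 / 2) * ((x - μ) ⬝ᵥ (S⁻¹ *ᵥ (x - μ))))

/-- The Gaussian probability measure `N(μ, Σ)` on `ℝⁿ`. -/
noncomputable def gaussianMeasure {n : ℕ} (μ : Fin n → ℝ)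
    (S : Matrix (Fin n) (Fin n) ℝ) : Measure (Fin n → ℝ) :=
  MeasureTheory.volume.withDensity fun x => ENNReal.ofReal (gaussianDensity μ S x)

/-- The joint law of `(x, y)` where `x ~ N(0, Γpr)`, `ε ~ N(0, Γobs)` independent of `x`,
and `y = G x + ε`. -/
noncomputable def jointMeasure {n m : ℕ} (G : Matrix (Fin m) (Fin n) ℝ)
    (Γpr : Matrix (Fin n) (Fin n) ℝ) (Γobs : Matrix (Fin m) (Fin m) ℝ) :
    Measure ((Fin n → ℝ) × (Fin m → ℝ)) :=
  Measure.map (fun p : (Fin n → ℝ) × (Fin m → ℝ) => (p.1, G *ᵥ p.1 + p.2))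
    ((gaussianMeasure 0 Γpr).prod (gaussianMeasure 0 Γobs))

/-- The Bayes risk `E[ ‖A y − x‖²_S ]` of the linear estimator `y ↦ A y`. -/
noncomputable def bayesRisk {n m : ℕ} (P : Measure ((Fin n → ℝ) × (Fin m → ℝ)))
    (S : Matrix (Fin n) (Fin n) ℝ) (A : Matrix (Fin n) (Fin m) ℝ) : ℝ :=
  ∫ p, (A *ᵥ p.2 - p.1) ⬝ᵥ (S *ᵥ (A *ᵥ p.2 - p.1)) ∂P

/-- standard Gaussian on `Fin n → ℝ` -/
noncomputable def stdG (n : ℕ) : Measure (Fin n → ℝ) :=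
  Measure.pi (fun _ => ProbabilityTheory.gaussianReal 0 1)

instance stdG_prob (n : ℕ) : IsProbabilityMeasure (stdG n) := by
  unfold stdG; infer_instance

lemma stdG_eq_withDensity (n : ℕ) : stdG n = (volume : Measure (Fin n → ℝ)).withDensity
    (fun x => ENNReal.ofReal (∏ i, ProbabilityTheory.gaussianPDFReal 0 1 (x i))) := by
  unfold stdG
  apply Measure.pi_eq
  intro s hs
  rw [withDensity_apply _ (MeasurableSet.univ_pi hs)]
  simp_rw [ProbabilityTheory.gaussianReal_apply_eq_integral 0 one_ne_zero]
  rw [← ENNReal.ofReal_prod_of_nonneg, volume_pi, Measure.restrict_pi_pi,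
    ← ofReal_integral_eq_lintegral_ofReal, 
    integral_fintype_prod_eq_prod]
  · exact Integrable.fintype_prod (f := fun i => ProbabilityTheory.gaussianPDFReal 0 1)
      (fun i => (ProbabilityTheory.integrable_gaussianPDFReal 0 1).restrict)
  · exact Filter.Eventually.of_forall fun x =>
      Finset.prod_nonneg fun i _ => ProbabilityTheory.gaussianPDFReal_nonneg _ _ _
  · intro i _
    exact integral_nonneg fun x => ProbabilityTheory.gaussianPDFReal_nonneg _ _ _

lemma density_comp {n : ℕ} (L : Matrix (Fin n) (Fin n) ℝ) (hL : L.det ≠ 0) (x : Fin n → ℝ) :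
    |L.det| * gaussianDensity 0 (L * Lᵀ) (L *ᵥ x) =
      ∏ i, ProbabilityTheory.gaussianPDFReal 0 1 (x i) := by
  have hu : IsUnit L.det := hL.isUnit
  have hut : IsUnit Lᵀ.det := by rwa [det_transpose]
  have hq : (L *ᵥ x) ⬝ᵥ ((L * Lᵀ)⁻¹ *ᵥ (L *ᵥ x)) = ∑ i, x i ^ 2 := by
    rw [Matrix.mul_inv_rev, mulVec_mulVec, Matrix.mul_assoc, Matrix.nonsing_inv_mul _ hu,
      Matrix.mul_one, ← Matrix.vecMul_transpose, ← dotProduct_mulVec, mulVec_mulVec,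
      Matrix.mul_nonsing_inv _ hut, one_mulVec]
    simp [dotProduct, sq]
  have hd : (L * Lᵀ).det ^ (-(1:ℝ)/2) = |L.det|⁻¹ := by
    rw [det_mul, det_transpose, ← abs_mul_abs_self, ← sq, ← Real.rpow_natCast,
      ← Real.rpow_mul (abs_nonneg _)]
    norm_num [Real.rpow_neg_one]
  have habs : |L.det| ≠ 0 := abs_ne_zero.mpr hL
  unfold gaussianDensity
  rw [sub_zero, hq, hd]
  simp only [ProbabilityTheory.gaussianPDFReal_def]
  rw [Finset.prod_mul_distrib, ← Real.exp_sum, Finset.prod_const, Finset.card_univ, Fintype.card_fin]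
  have h1 : (2 * Real.pi) ^ (-(n : ℝ) / 2) = (√(2 * Real.pi * ((1 : NNReal) : ℝ)))⁻¹ ^ n := by
    rw [NNReal.coe_one, mul_one, Real.sqrt_eq_rpow, ← Real.rpow_neg (by positivity),
      ← Real.rpow_natCast, ← Real.rpow_mul (by positivity)]
    congr 1; ring
  rw [h1]
  have h2 : -(1/2) * ∑ i, x i ^ 2 = ∑ i, -(x i - 0)^2 / (2 * ((1 : NNReal) : ℝ)) := by
    rw [Finset.mul_sum]
    apply Finset.sum_congr rfl; intro i _
    simp; ring
  rw [h2]
  field_simp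

lemma gaussianMeasure_eq_map {n : ℕ} (L : Matrix (Fin n) (Fin n) ℝ) (hL : L.det ≠ 0) :
    gaussianMeasure 0 (L * Lᵀ) = (stdG n).map (fun x => L *ᵥ x) := by
  have hm : Measurable (fun x : Fin n → ℝ => L *ᵥ x) :=
    (Continuous.matrix_mulVec continuous_const continuous_id).measurable
  have hρ : Measurable (fun x => ENNReal.ofReal (gaussianDensity 0 (L * Lᵀ) x)) := by
    apply Measurable.ennreal_ofReal
    apply Continuous.measurable
    unfold gaussianDensity
    simp only [sub_zero]
    have : Continuous fun x : Fin n → ℝ => (L * Lᵀ)⁻¹ *ᵥ x :=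
      Continuous.matrix_mulVec continuous_const continuous_id
    have : Continuous fun x : Fin n → ℝ => x ⬝ᵥ (L * Lᵀ)⁻¹ *ᵥ x :=
      Continuous.dotProduct continuous_id this
    fun_prop
  have hvol : (volume : Measure (Fin n → ℝ)) =
      ENNReal.ofReal |L.det| • Measure.map (fun x => L *ᵥ x) volume := by
    have := Real.map_matrix_volume_pi_eq_smul_volume_pi hL
    have h2 : (⇑(toLin' L)) = fun x => L *ᵥ x := by ext; simp
    rw [h2] at this
    rw [this, smul_smul, ← ENNReal.ofReal_mul (abs_nonneg _), ← abs_mul, mul_inv_cancel₀ hL]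
    simp
  ext s hs
  rw [Measure.map_apply hm hs, stdG_eq_withDensity, withDensity_apply _ (hm hs),
    gaussianMeasure, withDensity_apply _ hs]
  conv_lhs => rw [hvol]
  rw [Measure.restrict_smul, lintegral_smul_measure, setLIntegral_map hs hρ hm, smul_eq_mul]
  have hρ2 : Measurable (fun x => ENNReal.ofReal (gaussianDensity 0 (L * Lᵀ) (L *ᵥ x))) :=
    hρ.comp hm
  rw [← lintegral_const_mul _ hρ2]
  apply lintegral_congr
  intro x
  rw [← density_comp L hL, ENNReal.ofReal_mul (abs_nonneg _)]

lemma memLp_stdG (n : ℕ) (i : Fin n) : MemLp (fun x : Fin n → ℝ => x i) 2 (stdG n) := by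
  have h := ProbabilityTheory.memLp_id_gaussianReal' (μ := 0) (v := 1) 2 (by simp)
  exact h.comp_measurePreserving
    (measurePreserving_eval (fun _ : Fin n => ProbabilityTheory.gaussianReal 0 1) i)

lemma mean_stdG (n : ℕ) (i : Fin n) : ∫ x, x i ∂(stdG n) = 0 := by
  unfold stdG
  rw [integral_eval]
  exact ProbabilityTheory.integral_id_gaussianReal

lemma second_stdG (n : ℕ) (i j : Fin n) :
    ∫ x, x i * x j ∂(stdG n) = if i = j then 1 else 0 := by
  split_ifs with h
  · subst h
    unfold stdG
    rw [integral_comp_eval (μ := fun _ : Fin n => ProbabilityTheory.gaussianReal 0 1)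
      (f := fun x : ℝ => x * x) (by fun_prop)]
    have h1 := ProbabilityTheory.variance_fun_id_gaussianReal (μ := 0) (v := 1)
    rw [ProbabilityTheory.variance_of_integral_eq_zero (by fun_prop)
      ProbabilityTheory.integral_id_gaussianReal] at h1
    simpa [sq] using h1
  · have hind := ProbabilityTheory.iIndepFun_pi (ι := Fin n)
      (μ := fun _ => ProbabilityTheory.gaussianReal 0 1) (X := fun _ => (id : ℝ → ℝ))
      (fun _ => aemeasurable_id)
    have := (hind.indepFun h).integral_fun_mul_eq_mul_integral
      (measurable_pi_apply i).aestronglyMeasurable (measurable_pi_apply j).aestronglyMeasurable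
    have h0 := mean_stdG n i
    unfold stdG at h0 ⊢
    simp only [id] at this
    rw [this, h0, zero_mul]

lemma sum_expect {Ω ι : Type*} [MeasurableSpace Ω] [Fintype ι] [DecidableEq ι] (μ : Measure Ω)
    (z : Ω → ι → ℝ) (K : ι → ι → ℝ) (hI : ∀ a b, Integrable (fun q => z q a * z q b) μ)
    (hE : ∀ a b, ∫ q, z q a * z q b ∂μ = if a = b then 1 else 0) :
    ∫ q, ∑ a, ∑ b, K a b * (z q a * z q b) ∂μ = ∑ a, K a a := by
  rw [integral_finsetSum _ (fun a _ => integrable_finsetSum _ fun b _ => (hI a b).const_mul _)]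
  refine Finset.sum_congr rfl fun a _ => ?_
  rw [integral_finsetSum _ (fun b _ => (hI a b).const_mul _)]
  simp_rw [integral_const_mul, hE]
  simp

lemma quad_expect {n m k : ℕ} (S : Matrix (Fin k) (Fin k) ℝ) (P : Matrix (Fin k) (Fin n) ℝ)
    (Q : Matrix (Fin k) (Fin m) ℝ) :
    ∫ q : (Fin n → ℝ) × (Fin m → ℝ), (P *ᵥ q.1 + Q *ᵥ q.2) ⬝ᵥ (S *ᵥ (P *ᵥ q.1 + Q *ᵥ q.2))
      ∂((stdG n).prod (stdG m)) = (Pᵀ * S * P).trace + (Qᵀ * S * Q).trace := by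
  set M := fromCols P Q with hM
  set z : (Fin n → ℝ) × (Fin m → ℝ) → (Fin n ⊕ Fin m) → ℝ := fun q => Sum.elim q.1 q.2 with hz
  have hL : ∀ a, MemLp (fun q => z q a) 2 ((stdG n).prod (stdG m)) := by
    rintro (i | i)
    · exact (memLp_stdG n i).comp_measurePreserving measurePreserving_fst
    · exact (memLp_stdG m i).comp_measurePreserving measurePreserving_snd
  have hI : ∀ a b, Integrable (fun q => z q a * z q b) ((stdG n).prod (stdG m)) :=
    fun a b => (hL a).integrable_mul (hL b)
  have hE : ∀ a b, ∫ q, z q a * z q b ∂((stdG n).prod (stdG m)) = if a = b then 1 else 0 := by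
    rintro (i | i) (j | j)
    · have := integral_prod_mul (μ := stdG n) (ν := stdG m)
        (fun x => x i * x j) (fun _ => (1:ℝ))
      simp only [mul_one, second_stdG] at this
      simpa [hz] using this
    · have := integral_prod_mul (μ := stdG n) (ν := stdG m)
        (fun x => x i) (fun y => y j)
      simp only [mean_stdG] at this
      simpa [hz] using this
    · have := integral_prod_mul (μ := stdG n) (ν := stdG m)
        (fun x => x j) (fun y => y i)
      simp only [mean_stdG] at this
      simpa [hz, mul_comm] using this
    · have := integral_prod_mul (μ := stdG n) (ν := stdG m)
        (fun _ => (1:ℝ)) (fun x => x i * x j)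
      simp only [one_mul, second_stdG] at this
      simpa [hz] using this
  have hint : ∀ q : (Fin n → ℝ) × (Fin m → ℝ),
      (P *ᵥ q.1 + Q *ᵥ q.2) ⬝ᵥ (S *ᵥ (P *ᵥ q.1 + Q *ᵥ q.2)) =
      ∑ a, ∑ b, (Mᵀ * S * M) a b * (z q a * z q b) := by
    intro q
    have h1 : P *ᵥ q.1 + Q *ᵥ q.2 = M *ᵥ z q := by
      rw [hM, hz, fromCols_mulVec_sumElim]
    rw [h1]
    have h2 : (M *ᵥ z q) ⬝ᵥ (S *ᵥ (M *ᵥ z q)) = z q ⬝ᵥ ((Mᵀ * S * M) *ᵥ z q) := by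
      rw [← mulVec_mulVec, ← mulVec_mulVec, dotProduct_mulVec (z q), vecMul_transpose]
    rw [h2]
    simp only [dotProduct, mulVec, Finset.mul_sum]
    refine Finset.sum_congr rfl fun a _ => Finset.sum_congr rfl fun b _ => by ring
  simp_rw [hint]
  rw [sum_expect _ z (fun a b => (Mᵀ * S * M) a b) hI hE, Fintype.sum_sum_type]
  rfl

lemma joint_quad {n m : ℕ} (G : Matrix (Fin m) (Fin n) ℝ)
    (Spr : Matrix (Fin n) (Fin n) ℝ) (Sobs : Matrix (Fin m) (Fin m) ℝ)
    (h1 : Spr.det ≠ 0) (h2 : Sobs.det ≠ 0) (S : Matrix (Fin n) (Fin n) ℝ)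
    (B : Matrix (Fin n) (Fin m) ℝ) (c : ℝ) :
    ∫ p, (B *ᵥ p.2 - c • p.1) ⬝ᵥ (S *ᵥ (B *ᵥ p.2 - c • p.1))
      ∂(jointMeasure G (Spr * Sprᵀ) (Sobs * Sobsᵀ)) =
    (((B * G - c • 1) * Spr)ᵀ * S * ((B * G - c • 1) * Spr)).trace +
      ((B * Sobs)ᵀ * S * (B * Sobs)).trace := by
  have hc : ∀ {a b : ℕ} (L : Matrix (Fin a) (Fin b) ℝ), Continuous (fun x => L *ᵥ x) :=
    fun L => Continuous.matrix_mulVec continuous_const continuous_id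
  unfold jointMeasure
  rw [gaussianMeasure_eq_map _ h1, gaussianMeasure_eq_map _ h2,
    Measure.map_prod_map _ _ (hc _).measurable (hc _).measurable]
  have hg : Continuous (fun p : (Fin n → ℝ) × (Fin m → ℝ) => (p.1, G *ᵥ p.1 + p.2)) :=
    continuous_fst.prodMk (((hc G).comp continuous_fst).add continuous_snd)
  have hP : Continuous (Prod.map (fun x => Spr *ᵥ x) (fun x => Sobs *ᵥ x)) :=
    (hc Spr).prodMap (hc Sobs)
  rw [Measure.map_map hg.measurable hP.measurable]
  have hu : Continuous (fun p : (Fin n → ℝ) × (Fin m → ℝ) => B *ᵥ p.2 - c • p.1) :=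
    ((hc B).comp continuous_snd).sub (continuous_fst.const_smul c)
  have hu2 : Continuous (fun p : (Fin n → ℝ) × (Fin m → ℝ) =>
      (B *ᵥ p.2 - c • p.1) ⬝ᵥ (S *ᵥ (B *ᵥ p.2 - c • p.1))) :=
    Continuous.dotProduct hu ((hc S).comp hu)
  rw [integral_map (hg.comp hP).measurable.aemeasurable hu2.aestronglyMeasurable, ← quad_expect]
  congr 1
  ext q
  have : B *ᵥ (G *ᵥ (Spr *ᵥ q.1) + Sobs *ᵥ q.2) - c • (Spr *ᵥ q.1) =
      ((B * G - c • 1) * Spr) *ᵥ q.1 + (B * Sobs) *ᵥ q.2 := by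
    simp only [mulVec_add, ← mulVec_mulVec, sub_mulVec, smul_mulVec, one_mulVec]
    abel
  simp only [Function.comp, Prod.map]
  rw [this]

/-- `W diag(f) Wᵀ` -/
def Dg {n k : ℕ} (W : Matrix (Fin n) (Fin k) ℝ) (f : Fin k → ℝ) : Matrix (Fin n) (Fin n) ℝ :=
  W * diagonal f * Wᵀ

lemma Dg_mul {n k : ℕ} (W : Matrix (Fin n) (Fin k) ℝ) (hW : Wᵀ * W = 1) (f g : Fin k → ℝ) :
    Dg W f * Dg W g = Dg W (fun i => f i * g i) := by
  unfold Dg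
  calc W * diagonal f * Wᵀ * (W * diagonal g * Wᵀ)
      = W * diagonal f * (Wᵀ * W) * diagonal g * Wᵀ := by simp only [Matrix.mul_assoc]
    _ = _ := by rw [hW, Matrix.mul_one, Matrix.mul_assoc W, diagonal_mul_diagonal]

lemma Dg_tr {n k : ℕ} (W : Matrix (Fin n) (Fin k) ℝ) (hW : Wᵀ * W = 1) (f : Fin k → ℝ) :
    (Dg W f).trace = ∑ i, f i := by
  unfold Dg
  rw [Matrix.trace_mul_comm, ← Matrix.mul_assoc, hW, Matrix.one_mul, trace_diagonal]

lemma Dg_transpose {n k : ℕ} (W : Matrix (Fin n) (Fin k) ℝ) (f : Fin k → ℝ) :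
    (Dg W f)ᵀ = Dg W f := by
  simp [Dg, Matrix.mul_assoc]

lemma trace_core {n m k : ℕ} (W : Matrix (Fin n) (Fin k) ℝ) (V : Matrix (Fin m) (Fin k) ℝ)
    (hW : Wᵀ * W = 1) (hV : Vᵀ * V = 1) (d e : Fin k → ℝ) (c : ℝ)
    (N T : Matrix (Fin n) (Fin n) ℝ) (hN : Tᵀ * N * T = 1 + Dg W (fun i => d i * d i))
    (P : Matrix (Fin n) (Fin n) ℝ) (Q : Matrix (Fin n) (Fin m) ℝ)
    (hP : P = T * (Dg W (fun i => e i * d i) - c • 1)) (hQ : Q = T * (W * diagonal e * Vᵀ)) :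
    (Pᵀ * N * P).trace + (Qᵀ * N * Q).trace =
      c ^ 2 * n + ∑ i, (c * d i - e i * (1 + d i ^ 2)) ^ 2 := by
  have e1 : Pᵀ * N * P = (Dg W (fun i => e i * d i) - c • 1) *
      (1 + Dg W (fun i => d i * d i)) * (Dg W (fun i => e i * d i) - c • 1) := by
    rw [← hN, hP, transpose_mul, transpose_sub, Dg_transpose, transpose_smul, transpose_one]
    simp only [Matrix.mul_assoc]
  have e2 : (Qᵀ * N * Q).trace = ∑ i, e i * (1 + d i * d i) * e i := by
    have : Qᵀ * N * Q = V * (diagonal e * (Wᵀ * (1 + Dg W (fun i => d i * d i)) * W) *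
        diagonal e) * Vᵀ := by
      rw [← hN, hQ]
      simp only [transpose_mul, transpose_transpose, diagonal_transpose, Matrix.mul_assoc]
    have h3 : Wᵀ * (1 + Dg W (fun i => d i * d i)) * W = diagonal (fun i => 1 + d i * d i) := by
      have : Wᵀ * Dg W (fun i => d i * d i) * W =
          (Wᵀ * W) * diagonal (fun i => d i * d i) * (Wᵀ * W) := by
        simp only [Dg, Matrix.mul_assoc]
      rw [Matrix.mul_add, Matrix.add_mul, this, Matrix.mul_one, hW, Matrix.one_mul,
        Matrix.mul_one, ← diagonal_one, diagonal_add]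
    rw [this, h3, Matrix.trace_mul_comm, ← Matrix.mul_assoc, hV, Matrix.one_mul,
      diagonal_mul_diagonal, diagonal_mul_diagonal, trace_diagonal]
  rw [e1, e2]
  simp only [Matrix.mul_add, Matrix.add_mul, Matrix.mul_sub, Matrix.sub_mul, Matrix.mul_one,
    Matrix.one_mul, Matrix.smul_mul, Matrix.mul_smul, Dg_mul W hW, trace_add, trace_sub,
    trace_smul, Dg_tr W hW, trace_one, Fintype.card_fin, smul_eq_mul]
  have : ∑ i, (c * d i - e i * (1 + d i ^ 2)) ^ 2 =
    c ^ 2 * ∑ i, d i * d i - 2 * c * ∑ i, e i * d i - 2 * c * ∑ i, e i * d i * (d i * d i)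
      + ∑ i, e i * d i * (e i * d i) + ∑ i, e i * d i * (d i * d i) * (e i * d i)
      + ∑ i, e i * (1 + d i * d i) * e i := by
    simp only [Finset.mul_sum, ← Finset.sum_sub_distrib, ← Finset.sum_add_distrib]
    refine Finset.sum_congr rfl fun i _ => by ring
  have h4 : ∑ i, d i * d i * (e i * d i) = ∑ i, e i * d i * (d i * d i) :=
    Finset.sum_congr rfl fun i _ => by ring
  rw [this]
  try rw [h4]
  ring

/-- Theorem 4.1 (ii): the minimum Bayes risk of the optimal rank-`r` approximation `A*`
satisfies `E‖A*y − x‖² = E‖A*y − μpos(y)‖² + E‖μpos(y) − x‖² = Σ_{i>r} δᵢ² + n`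
(all norms weighted by `Γpos⁻¹`). -/
theorem minimum_bayes_risk_low_rank
    (n m r : ℕ) (hn : 0 < n) (hm : 0 < m) (hr : r ≤ min m n)
    (G : Matrix (Fin m) (Fin n) ℝ)
    (Γobs : Matrix (Fin m) (Fin m) ℝ) (hobs : Γobs.PosDef)
    (Γpr : Matrix (Fin n) (Fin n) ℝ) (hpr : Γpr.PosDef)
    (Γpos : Matrix (Fin n) (Fin n) ℝ)
    (hΓpos : Γpos = (Gᵀ * Γobs⁻¹ * G + Γpr⁻¹)⁻¹)
    (Spr : Matrix (Fin n) (Fin n) ℝ) (hSpr : Γpr = Spr * Sprᵀ)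
    (Sobs : Matrix (Fin m) (Fin m) ℝ) (hSobs : Γobs = Sobs * Sobsᵀ)
    (δ : Fin (min m n) → ℝ)
    (v : Fin (min m n) → Fin m → ℝ) (w : Fin (min m n) → Fin n → ℝ)
    (hδ : ∀ i, 0 ≤ δ i)
    (hord : ∀ i j : Fin (min m n), i ≤ j → δ j ≤ δ i)
    (hv : ∀ i j, v i ⬝ᵥ v j = if i = j then (1:ℝ) else 0)
    (hw : ∀ i j, w i ⬝ᵥ w j = if i = j then (1:ℝ) else 0)
    (hsvd : Sobs⁻¹ * G * Spr =
      ∑ i : Fin (min m n), δ i • vecMulVec (v i) (w i))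
    (Astar : Matrix (Fin n) (Fin m) ℝ)
    (hAstar : Astar = ∑ i ∈ Finset.univ.filter (fun i : Fin (min m n) => (i : ℕ) < r),
      (δ i / (1 + (δ i) ^ 2)) • vecMulVec (Spr *ᵥ w i) ((Sobs⁻¹)ᵀ *ᵥ v i))
    (μpos : (Fin m → ℝ) → (Fin n → ℝ))
    (hμpos : ∀ y, μpos y = (Γpos * Gᵀ * Γobs⁻¹) *ᵥ y) :
    bayesRisk (jointMeasure G Γpr Γobs) Γpos⁻¹ Astar =
      (∫ p, (Astar *ᵥ p.2 - μpos p.2) ⬝ᵥ (Γpos⁻¹ *ᵥ (Astar *ᵥ p.2 - μpos p.2))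
          ∂(jointMeasure G Γpr Γobs)) +
        (∫ p, (μpos p.2 - p.1) ⬝ᵥ (Γpos⁻¹ *ᵥ (μpos p.2 - p.1))
          ∂(jointMeasure G Γpr Γobs)) ∧
    bayesRisk (jointMeasure G Γpr Γobs) Γpos⁻¹ Astar =
      (∑ i ∈ Finset.univ.filter (fun i : Fin (min m n) => r ≤ (i : ℕ)), (δ i) ^ 2) +
        (n : ℝ) := by
  classical
  have hu1 : IsUnit Spr.det := by
    have := hpr.det_pos
    rw [hSpr, det_mul, det_transpose] at this
    exact isUnit_iff_ne_zero.mpr fun h => by simp [h] at this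
  have hu2 : IsUnit Sobs.det := by
    have := hobs.det_pos
    rw [hSobs, det_mul, det_transpose] at this
    exact isUnit_iff_ne_zero.mpr fun h => by simp [h] at this
  have hu1t : IsUnit Sprᵀ.det := by rwa [det_transpose]
  have hu2t : IsUnit Sobsᵀ.det := by rwa [det_transpose]
  set W : Matrix (Fin n) (Fin (min m n)) ℝ := Matrix.of fun a i => w i a with hWdef
  set V : Matrix (Fin m) (Fin (min m n)) ℝ := Matrix.of fun a i => v i a with hVdef
  have hW : Wᵀ * W = 1 := by
    ext i j
    rw [one_apply, ← hw i j]; rfl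
  have hV : Vᵀ * V = 1 := by
    ext i j
    rw [one_apply, ← hv i j]; rfl
  have hsum : ∀ f : Fin (min m n) → ℝ, ∑ i, f i • vecMulVec (v i) (w i) = V * diagonal f * Wᵀ := by
    intro f
    ext a b
    rw [mul_apply]
    simp only [Matrix.sum_apply, Matrix.smul_apply, vecMulVec_apply, smul_eq_mul,
      mul_diagonal, transpose_apply, hWdef, hVdef, Matrix.of_apply]
    exact Finset.sum_congr rfl fun i _ => by ring
  have hsum2 : ∀ f : Fin (min m n) → ℝ, ∑ i, f i • vecMulVec (w i) (v i) = W * diagonal f * Vᵀ := by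
    intro f
    ext a b
    rw [mul_apply]
    simp only [Matrix.sum_apply, Matrix.smul_apply, vecMulVec_apply, smul_eq_mul,
      mul_diagonal, transpose_apply, hWdef, hVdef, Matrix.of_apply]
    exact Finset.sum_congr rfl fun i _ => by ring
  rw [hsum] at hsvd
  have hG : G * Spr = Sobs * (V * diagonal δ * Wᵀ) := by
    rw [← hsvd, Matrix.mul_assoc, ← Matrix.mul_assoc Sobs, Matrix.mul_nonsing_inv _ hu2,
      Matrix.one_mul]
  set f : Fin (min m n) → ℝ := fun i => δ i / (1 + δ i ^ 2) with hf
  set e : Fin (min m n) → ℝ := fun i => if (i : ℕ) < r then f i else 0 with he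
  have hpos : ∀ i, (1 + δ i ^ 2) ≠ 0 := fun i => by positivity
  -- Astar in matrix form
  have hA : Astar = Spr * (W * diagonal e * Vᵀ) * Sobs⁻¹ := by
    rw [← hsum2, hAstar, Finset.sum_filter, Matrix.mul_sum, Matrix.sum_mul]
    refine Finset.sum_congr rfl fun i _ => ?_
    have h0 : vecMulVec (Spr *ᵥ w i) ((Sobs⁻¹)ᵀ *ᵥ v i) =
        Spr * vecMulVec (w i) (v i) * Sobs⁻¹ := by
      rw [mulVec_transpose, mul_vecMulVec, vecMulVec_mul]
    rw [h0, he]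
    split_ifs with hi <;> simp [hf, hi]
  set N := Gᵀ * Γobs⁻¹ * G + Γpr⁻¹ with hNdef
  have hobsinv : Γobs⁻¹ = (Sobs⁻¹)ᵀ * Sobs⁻¹ := by
    rw [hSobs, Matrix.mul_inv_rev, transpose_nonsing_inv]
  have hprinv : Γpr⁻¹ = (Spr⁻¹)ᵀ * Spr⁻¹ := by
    rw [hSpr, Matrix.mul_inv_rev, transpose_nonsing_inv]
  have hSS : Sobs⁻¹ * Sobs = 1 := Matrix.nonsing_inv_mul _ hu2
  have hPP : Spr⁻¹ * Spr = 1 := Matrix.nonsing_inv_mul _ hu1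
  have hPP' : Spr * Spr⁻¹ = 1 := Matrix.mul_nonsing_inv _ hu1
  have hN : Sprᵀ * N * Spr = 1 + Dg W (fun i => δ i * δ i) := by
    have a1 : Sprᵀ * N * Spr = (Sobs⁻¹ * (G * Spr))ᵀ * (Sobs⁻¹ * (G * Spr)) +
        (Spr⁻¹ * Spr)ᵀ * (Spr⁻¹ * Spr) := by
      rw [hNdef, hobsinv, hprinv]
      simp only [transpose_mul, Matrix.mul_add, Matrix.add_mul, Matrix.mul_assoc]
    rw [a1, hPP, hG, ← Matrix.mul_assoc Sobs⁻¹, hSS, Matrix.one_mul, transpose_one,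
      Matrix.one_mul, add_comm]
    congr 1
    have : (V * diagonal δ * Wᵀ)ᵀ * (V * diagonal δ * Wᵀ) =
        W * (diagonal δ * (Vᵀ * V) * diagonal δ) * Wᵀ := by
      simp only [transpose_mul, transpose_transpose, diagonal_transpose, Matrix.mul_assoc]
    rw [this, hV, Matrix.mul_one, diagonal_mul_diagonal]; rfl
  have hNpd : N.PosDef := by
    have h1 : (Gᵀ * Γobs⁻¹ * G).PosSemidef := by
      have := hobs.inv.posSemidef.conjTranspose_mul_mul_same G
      simpa [conjTranspose_eq_transpose_of_trivial] using this
    exact PosDef.posSemidef_add h1 hpr.inv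
  have hNu : IsUnit N.det := hNpd.det_pos.ne'.isUnit
  have hposinv : Γpos⁻¹ = N := by rw [hΓpos, Matrix.nonsing_inv_nonsing_inv _ hNu]
  have hM : Γpos * Gᵀ * Γobs⁻¹ = Spr * (W * diagonal f * Vᵀ) * Sobs⁻¹ := by
    have key : N * (Spr * (W * diagonal f * Vᵀ) * Sobs⁻¹) = Gᵀ * Γobs⁻¹ := by
      have k1 : Sprᵀ * (N * (Spr * (W * diagonal f * Vᵀ) * Sobs⁻¹)) =
          Sprᵀ * (Gᵀ * Γobs⁻¹) := by
        have l1 : Sprᵀ * (N * (Spr * (W * diagonal f * Vᵀ) * Sobs⁻¹)) =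
            (Sprᵀ * N * Spr) * (W * diagonal f * Vᵀ) * Sobs⁻¹ := by
          simp only [Matrix.mul_assoc]
        have l2 : Sprᵀ * (Gᵀ * Γobs⁻¹) = (Sobs⁻¹ * (G * Spr))ᵀ * Sobs⁻¹ := by
          rw [hobsinv]; simp only [transpose_mul, Matrix.mul_assoc]
        rw [l1, l2, hN, hG, ← Matrix.mul_assoc Sobs⁻¹, hSS, Matrix.one_mul]
        congr 1
        have l3 : Dg W (fun i => δ i * δ i) * (W * diagonal f * Vᵀ) =
            W * (diagonal (fun i => δ i * δ i) * (Wᵀ * W) * diagonal f) * Vᵀ := by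
          simp only [Dg, Matrix.mul_assoc]
        rw [Matrix.add_mul, l3, hW, Matrix.mul_one, Matrix.one_mul, diagonal_mul_diagonal,
          ← Matrix.add_mul, ← Matrix.mul_add, diagonal_add]
        simp only [transpose_mul, transpose_transpose, diagonal_transpose, ← Matrix.mul_assoc]
        congr 3
        ext i
        have := hpos i
        simp only [hf]
        field_simp
      have k2 := congrArg (fun X => (Sprᵀ)⁻¹ * X) k1
      simpa only [← Matrix.mul_assoc, Matrix.nonsing_inv_mul _ hu1t, Matrix.one_mul] using k2
    rw [Matrix.mul_assoc, ← key, hΓpos, ← Matrix.mul_assoc, Matrix.nonsing_inv_mul _ hNu,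
      Matrix.one_mul]
  -- general formula
  have main : ∀ (g : Fin (min m n) → ℝ) (c : ℝ),
      ∫ p, ((Spr * (W * diagonal g * Vᵀ) * Sobs⁻¹) *ᵥ p.2 - c • p.1) ⬝ᵥ
        (N *ᵥ ((Spr * (W * diagonal g * Vᵀ) * Sobs⁻¹) *ᵥ p.2 - c • p.1))
        ∂(jointMeasure G Γpr Γobs) =
      c ^ 2 * n + ∑ i, (c * δ i - g i * (1 + δ i ^ 2)) ^ 2 := by
    intro g c
    rw [hSpr, hSobs, joint_quad G Spr Sobs hu1.ne_zero hu2.ne_zero]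
    apply trace_core W V hW hV δ g c N Spr hN
    · have : (Spr * (W * diagonal g * Vᵀ) * Sobs⁻¹ * G) * Spr =
          Spr * (W * diagonal g * Vᵀ) * (Sobs⁻¹ * (G * Spr)) := by
        simp only [Matrix.mul_assoc]
      rw [Matrix.sub_mul, this, hG, ← Matrix.mul_assoc Sobs⁻¹, hSS, Matrix.one_mul,
        Matrix.mul_sub, Matrix.smul_mul, Matrix.one_mul, Matrix.mul_smul, Matrix.mul_one]
      congr 1
      have l : Spr * (W * diagonal g * Vᵀ) * (V * diagonal δ * Wᵀ) =
          Spr * (W * (diagonal g * (Vᵀ * V) * diagonal δ) * Wᵀ) := by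
        simp only [Matrix.mul_assoc]
      rw [l, hV, Matrix.mul_one, diagonal_mul_diagonal]; rfl
    · rw [Matrix.mul_assoc _ Sobs⁻¹, hSS, Matrix.mul_one]
  have hsplit : ∀ (c : ℝ) (g : Fin (min m n) → ℝ), 
      (∀ i, (c * δ i - g i * (1 + δ i ^ 2)) ^ 2 = if r ≤ (i : ℕ) then δ i ^ 2 else 0) →
      ∑ i, (c * δ i - g i * (1 + δ i ^ 2)) ^ 2 =
        ∑ i ∈ Finset.univ.filter (fun i : Fin (min m n) => r ≤ (i : ℕ)), (δ i) ^ 2 := by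
    intro c g h
    rw [Finset.sum_filter]
    exact Finset.sum_congr rfl fun i _ => h i
  have hff : ∀ i, f i * (1 + δ i ^ 2) = δ i := fun i => div_mul_cancel₀ _ (hpos i)
  have R1 : bayesRisk (jointMeasure G Γpr Γobs) Γpos⁻¹ Astar =
      (∑ i ∈ Finset.univ.filter (fun i : Fin (min m n) => r ≤ (i : ℕ)), (δ i) ^ 2) +
        (n : ℝ) := by
    have h := main e 1
    rw [hsplit] at h
    · rw [← hA] at h
      simp only [one_smul] at h
      rw [bayesRisk, hposinv, h]; ring
    · intro i
      by_cases hi : (i : ℕ) < r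
      · simp [he, hi, hff]
      · simp [he, hi, not_lt.mp hi]
  have R2 : (∫ p, (μpos p.2 - p.1) ⬝ᵥ (Γpos⁻¹ *ᵥ (μpos p.2 - p.1))
          ∂(jointMeasure G Γpr Γobs)) = n := by
    have h := main f 1
    simp only [hff, one_smul, one_mul, sub_self] at h
    simp only [hμpos, hM, hposinv]
    rw [h]; simp
  have R3 : (∫ p, (Astar *ᵥ p.2 - μpos p.2) ⬝ᵥ (Γpos⁻¹ *ᵥ (Astar *ᵥ p.2 - μpos p.2))
          ∂(jointMeasure G Γpr Γobs)) =
      ∑ i ∈ Finset.univ.filter (fun i : Fin (min m n) => r ≤ (i : ℕ)), (δ i) ^ 2 := by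
    have h := main (fun i => e i - f i) 0
    rw [hsplit] at h
    · have hd : Spr * (W * diagonal (fun i => e i - f i) * Vᵀ) * Sobs⁻¹ =
          Astar - Γpos * Gᵀ * Γobs⁻¹ := by
        rw [hA, hM, ← diagonal_sub, Matrix.mul_sub, Matrix.sub_mul, Matrix.mul_sub,
          Matrix.sub_mul]
      rw [hd] at h
      simp only [zero_smul, sub_zero, sub_mulVec] at h
      simp only [hμpos, hposinv]
      rw [h]; simp
    · intro i
      rw [sub_mul, hff]
      by_cases hi : (i : ℕ) < r
      · simp [he, hi, hff]
      · simp [he, hi, not_lt.mp hi]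
  exact ⟨by rw [R1, R2, R3], R1⟩
end

section
/- Let Γ̂_pos = Γ_pr − Σ_{i=1}^{r} (δᵢ²/(1+δᵢ²)) ŵᵢ ŵᵢᵀ be the optimal approximation of Γ_pos in 𝓜_r. Then the matrix Â* = Γ̂_pos Gᵀ Γ_obs⁻¹ minimizes the Bayes risk E[ ‖A y − x‖²_{Γ_pos⁻¹} ] over the class 𝓐̂_r = { (Γ_pr − B) Gᵀ Γ_obs⁻¹ : B a real n×n matrix with rank(B) ≤ r }, where the expectation is over the joint law of (x, y). -/
open Matrix MeasureTheory Finset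

theorem ey_sum {n r : ℕ} (s p : Fin n → ℝ) (hs : ∀ i, 0 ≤ s i)
    (hord : ∀ i j : Fin n, i ≤ j → s j ≤ s i)
    (hp0 : ∀ i, 0 ≤ p i) (hp1 : ∀ i, p i ≤ 1) (hsum : ∑ i, p i ≤ r) :
    ∑ i : Fin n, (if (i : ℕ) < r then 0 else s i) ≤ ∑ i, s i * (1 - p i) := by
  by_cases hr : r < n
  · set t := s ⟨r, hr⟩
    have h1 : ∀ i : Fin n, (if (i : ℕ) < r then 0 else s i) ≤
        s i * (1 - p i) - t * ((if (i : ℕ) < r then 1 else 0) - p i) := by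
      intro i
      split_ifs with h
      · have : t ≤ s i := hord _ _ (by simp [Fin.le_def]; omega)
        nlinarith [hp1 i]
      · have : s i ≤ t := hord _ _ (by simp [Fin.le_def]; omega)
        nlinarith [hp0 i]
    have hc : ∑ i : Fin n, (if (i : ℕ) < r then (1:ℝ) else 0) = r := by
      rw [Finset.sum_boole, Fin.card_filter_val_lt, min_eq_right hr.le]
    have h2 := Finset.sum_le_sum (fun i (_ : i ∈ Finset.univ) => h1 i)
    rw [Finset.sum_sub_distrib, ← Finset.mul_sum, Finset.sum_sub_distrib, hc] at h2
    have : 0 ≤ t := hs _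
    nlinarith [mul_nonneg this (sub_nonneg.2 hsum)]
  · apply Finset.sum_le_sum
    intro i _
    rw [if_pos (by omega)]
    exact mul_nonneg (hs i) (sub_nonneg.2 (hp1 i))

theorem ey {n r : ℕ} (s : Fin n → ℝ) (hord : ∀ i j : Fin n, i ≤ j → s j ^ 2 ≤ s i ^ 2)
    (C : Matrix (Fin n) (Fin n) ℝ) (hC : C.rank ≤ r) :
    ∑ i : Fin n, (if (i : ℕ) < r then 0 else s i ^ 2) ≤
      ∑ i, ∑ j, ((if i = j then s j else 0) - C i j) ^ 2 := by
  let c : Fin n → EuclideanSpace ℝ (Fin n) := fun j => WithLp.toLp 2 (fun i => C i j)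
  let U : Submodule ℝ (EuclideanSpace ℝ (Fin n)) := Submodule.span ℝ (Set.range c)
  have hU : Module.finrank ℝ U ≤ r := by
    refine le_trans (le_of_eq ?_) hC
    rw [Matrix.rank_eq_finrank_span_cols]
    have : U = (Submodule.span ℝ (Set.range C.col)).map
        (WithLp.linearEquiv 2 ℝ (Fin n → ℝ)).symm.toLinearMap := by
      rw [Submodule.map_span, ← Set.range_comp]; rfl
    rw [this]
    exact LinearEquiv.finrank_map_eq _ _
  let b := stdOrthonormalBasis ℝ U
  let e : Fin n → EuclideanSpace ℝ (Fin n) := fun j => EuclideanSpace.single j 1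
  let p : Fin n → ℝ := fun j => ‖U.starProjection (e j)‖ ^ 2
  have he : ∀ j, ‖e j‖ = 1 := fun j => by simp [e]
  have hp : ∀ j, p j = ∑ k, (b k : EuclideanSpace ℝ (Fin n)) j ^ 2 := by
    intro j
    have h1 : ‖U.starProjection (e j)‖ = ‖U.orthogonalProjectionOnto (e j)‖ := by
      rw [Submodule.starProjection_apply]; rfl
    simp only [p]
    rw [h1, ← b.sum_sq_norm_inner_right]
    refine Finset.sum_congr rfl fun k _ => ?_
    rw [Submodule.inner_orthogonalProjectionOnto_eq_of_mem_left]
    simp [e, EuclideanSpace.inner_single_right]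
  have hsum : ∑ j, p j ≤ r := by
    simp_rw [hp]
    rw [Finset.sum_comm]
    have : ∀ k, ∑ j, (b k : EuclideanSpace ℝ (Fin n)) j ^ 2 = 1 := by
      intro k
      have := b.orthonormal.1 k
      rw [← EuclideanSpace.real_norm_sq_eq]
      have h2 : ‖(b k : EuclideanSpace ℝ (Fin n))‖ = 1 := this
      rw [h2]; norm_num
    simp only [this]
    simpa using hU
  have hpy : ∀ j, ‖e j - U.starProjection (e j)‖ ^ 2 = 1 - p j := by
    intro j
    have := Submodule.norm_sq_eq_add_norm_sq_starProjection (e j) U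
    rw [he, Submodule.starProjection_orthogonal_val] at this
    simp only [p]; linarith
  have hcol : ∀ j, s j ^ 2 * (1 - p j) ≤ ∑ i, ((if i = j then s j else 0) - C i j) ^ 2 := by
    intro j
    have h1 : ∑ i, ((if i = j then s j else 0) - C i j) ^ 2 = ‖s j • e j - c j‖ ^ 2 := by
      rw [EuclideanSpace.real_norm_sq_eq]
      refine Finset.sum_congr rfl fun i _ => ?_
      simp [e, c]
    rw [h1, ← hpy, ← sq_abs (s j), ← mul_pow]
    apply pow_le_pow_left₀ (by positivity)
    rw [← Real.norm_eq_abs, ← norm_smul, smul_sub, ← map_smul]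
    have := U.starProjection_minimal (y := s j • e j)
    rw [this]
    exact ciInf_le ⟨0, by rintro _ ⟨x, rfl⟩; exact norm_nonneg _⟩
      (⟨c j, Submodule.subset_span ⟨j, rfl⟩⟩ : U)
  rw [Finset.sum_comm]
  refine (ey_sum (fun i => s i ^ 2) p (fun i => sq_nonneg _) hord (fun i => sq_nonneg _) ?_ hsum).trans
    (Finset.sum_le_sum fun j _ => hcol j)
  intro i
  have := hpy i
  nlinarith [sq_nonneg ‖e i - U.starProjection (e i)‖]

section Factor

open scoped MatrixOrder Matrix.Norms.L2Operator

theorem psd_factor {m : ℕ} (X : Matrix (Fin m) (Fin m) ℝ) (hX : X.PosDef) :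
    ∃ Y : Matrix (Fin m) (Fin m) ℝ, X = Yᵀ * Y := by
  obtain ⟨Y, hY⟩ := CStarAlgebra.nonneg_iff_eq_star_mul_self.mp hX.posSemidef.nonneg
  refine ⟨Y, ?_⟩
  rw [hY, star_eq_conjTranspose, conjTranspose_eq_transpose_of_trivial]

end Factor

section Gaussian

open ProbabilityTheory

theorem pi_gauss (n : ℕ) : Measure.pi (fun _ : Fin n => gaussianReal 0 1) =
    (volume : Measure (Fin n → ℝ)).withDensity
      (fun z => ENNReal.ofReal (∏ i, gaussianPDFReal 0 1 (z i))) := by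
  apply Measure.pi_eq
  intro s hs
  rw [withDensity_apply _ (MeasurableSet.univ_pi hs), ← lintegral_indicator (MeasurableSet.univ_pi hs)]
  have h1 : ∀ z : Fin n → ℝ, (Set.univ.pi s).indicator
      (fun z => ENNReal.ofReal (∏ i, gaussianPDFReal 0 1 (z i))) z =
      ENNReal.ofReal (∏ i, (s i).indicator (gaussianPDFReal 0 1) (z i)) := by
    intro z
    by_cases hz : z ∈ Set.univ.pi s
    · rw [Set.indicator_of_mem hz]
      congr 1
      refine Finset.prod_congr rfl fun i _ => ?_
      rw [Set.indicator_of_mem (hz i trivial)]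
    · rw [Set.indicator_of_notMem hz]
      simp only [Set.mem_pi, Set.mem_univ, forall_const, not_forall] at hz
      obtain ⟨i, hi⟩ := hz
      rw [Finset.prod_eq_zero (Finset.mem_univ i) (Set.indicator_of_notMem hi _)]
      simp
  have hi : ∀ i, Integrable ((s i).indicator (gaussianPDFReal 0 1)) :=
    fun i => (integrable_gaussianPDFReal 0 1).indicator (hs i)
  have hn : ∀ i x, 0 ≤ (s i).indicator (gaussianPDFReal 0 1) x :=
    fun i x => Set.indicator_nonneg (fun _ _ => gaussianPDFReal_nonneg _ _ _) _
  simp_rw [h1]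
  rw [← ofReal_integral_eq_lintegral_ofReal, integral_fintype_prod_volume_eq_prod,
    ENNReal.ofReal_prod_of_nonneg]
  · refine Finset.prod_congr rfl fun i _ => ?_
    rw [gaussianReal_apply_eq_integral _ one_ne_zero, integral_indicator (hs i)]
  · intro i _
    exact integral_nonneg (hn i)
  · exact Integrable.fintype_prod hi
  · exact Filter.Eventually.of_forall fun z => Finset.prod_nonneg fun i _ => hn i _

theorem gauss_map {n : ℕ} (S L : Matrix (Fin n) (Fin n) ℝ) (hS : S = L * Lᵀ) (hL : L.det ≠ 0) :
    gaussianMeasure 0 S = Measure.map (fun z => L *ᵥ z) (Measure.pi (fun _ : Fin n => gaussianReal 0 1)) := by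
  have hvol := Real.map_matrix_volume_pi_eq_smul_volume_pi hL
  have hmL : Measurable (fun z : Fin n → ℝ => L *ᵥ z) := (Continuous.matrix_mulVec continuous_const continuous_id).measurable
  have hdm : Measurable (gaussianDensity 0 S) := by
    unfold gaussianDensity
    apply Continuous.measurable
    fun_prop
  have hvol2 : (volume : Measure (Fin n → ℝ)) = ENNReal.ofReal |L.det| • Measure.map (fun z => L *ᵥ z) volume := by
    have : (fun z => L *ᵥ z) = ⇑(toLin' L) := by ext; simp
    rw [this, hvol, smul_smul, ← ENNReal.ofReal_mul (abs_nonneg _), ← abs_mul, mul_inv_cancel₀ hL]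
    simp
  rw [pi_gauss]
  ext s hs
  rw [Measure.map_apply hmL hs, withDensity_apply _ (hmL hs), gaussianMeasure, withDensity_apply _ hs]
  conv_lhs => rw [hvol2]
  rw [Measure.restrict_smul, lintegral_smul_measure, setLIntegral_map hs hdm.ennreal_ofReal hmL,
    smul_eq_mul, ← lintegral_const_mul (f := fun z => ENNReal.ofReal (gaussianDensity 0 S (L *ᵥ z))) _
      (hdm.ennreal_ofReal.comp hmL)]
  refine lintegral_congr fun z => ?_
  rw [← ENNReal.ofReal_mul (abs_nonneg _)]
  congr 1
  have hd : S.det = L.det ^ 2 := by rw [hS, det_mul, det_transpose, sq]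
  have hq : (L *ᵥ z - 0) ⬝ᵥ (S⁻¹ *ᵥ (L *ᵥ z - 0)) = ∑ i, z i ^ 2 := by
    have hu : IsUnit L.det := isUnit_iff_ne_zero.2 hL
    have hut : IsUnit Lᵀ.det := by rwa [det_transpose]
    have : S⁻¹ * L = Lᵀ⁻¹ := by
      rw [hS, Matrix.mul_inv_rev, Matrix.mul_assoc, nonsing_inv_mul _ hu, Matrix.mul_one]
    rw [sub_zero, mulVec_mulVec, this, dotProduct_mulVec, ← mulVec_transpose,
      mulVec_mulVec, transpose_nonsing_inv, transpose_transpose, nonsing_inv_mul _ hu, one_mulVec]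
    simp [dotProduct, sq]
  have hpow : (L.det ^ 2) ^ (-(1:ℝ)/2) = |L.det|⁻¹ := by
    rw [← sq_abs, ← Real.rpow_natCast, ← Real.rpow_mul (abs_nonneg _)]
    norm_num [Real.rpow_neg_one]
  have h0 : |L.det| ≠ 0 := abs_ne_zero.2 hL
  unfold gaussianDensity
  rw [hq, hd, hpow]
  simp only [gaussianPDFReal]
  rw [Finset.prod_mul_distrib, ← Real.exp_sum]
  have hc : (2 * Real.pi) ^ (-(n:ℝ)/2) = ∏ i : Fin n, (√(2 * Real.pi * ((1 : NNReal):ℝ)))⁻¹ := by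
    have h2 : (0:ℝ) ≤ 2 * Real.pi := by positivity
    rw [Finset.prod_const, Finset.card_univ, Fintype.card_fin, NNReal.coe_one, mul_one,
      Real.sqrt_eq_rpow, ← Real.rpow_neg h2, ← Real.rpow_natCast, ← Real.rpow_mul h2]
    congr 1; ring
  rw [hc]
  have he : ∑ i, -(z i - 0) ^ 2 / (2 * ((1 : NNReal):ℝ)) = -(1/2) * ∑ i, z i ^ 2 := by
    rw [Finset.mul_sum]; refine Finset.sum_congr rfl fun i _ => ?_
    push_cast; ring
  rw [he]
  field_simp

theorem std_mom (n : ℕ) (i j : Fin n) :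
    Integrable (fun z : Fin n → ℝ => z i * z j) (Measure.pi (fun _ : Fin n => gaussianReal 0 1)) ∧
    ∫ z : Fin n → ℝ, z i * z j ∂(Measure.pi (fun _ : Fin n => gaussianReal 0 1)) =
      if i = j then 1 else 0 := by
  have hmp : ∀ i, MeasurePreserving (Function.eval i) (Measure.pi (fun _ : Fin n => gaussianReal 0 1))
    (gaussianReal 0 1) := fun i => measurePreserving_eval _ i
  have hL2 : ∀ i : Fin n, MemLp (fun z : Fin n → ℝ => z i) 2 (Measure.pi (fun _ : Fin n => gaussianReal 0 1)) := by
    intro i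
    exact (memLp_id_gaussianReal' (μ := 0) (v := 1) 2 (by simp)).comp_measurePreserving (hmp i)
  refine ⟨(hL2 i).integrable_mul (hL2 j), ?_⟩
  split_ifs with h
  · subst h
    have h1 := integral_comp_eval (μ := fun _ : Fin n => gaussianReal 0 1) (i := i)
      (f := fun x : ℝ => x * x) (by fun_prop)
    rw [h1]
    have h2 := variance_eq_sub (memLp_id_gaussianReal' (μ := 0) (v := 1) 2 (by simp))
    rw [variance_id_gaussianReal] at h2
    simp [integral_id_gaussianReal] at h2
    rw [h2]
    simp [sq]
  · have hind : IndepFun (fun z : Fin n → ℝ => z i) (fun z : Fin n → ℝ => z j)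
        (Measure.pi (fun _ : Fin n => gaussianReal 0 1)) :=
      (iIndepFun_pi (μ := fun _ : Fin n => gaussianReal 0 1) (X := fun _ x => x)
        (fun _ => aemeasurable_id)).indepFun h
    have h1 := hind.integral_mul_eq_mul_integral
      (measurable_pi_apply i).aestronglyMeasurable (measurable_pi_apply j).aestronglyMeasurable
    have h2 := integral_comp_eval (μ := fun _ : Fin n => gaussianReal 0 1) (i := i)
      (f := fun x : ℝ => x) (by fun_prop)
    rw [integral_id_gaussianReal] at h2
    rw [h2, zero_mul] at h1
    exact h1

theorem std_mean (n : ℕ) (i : Fin n) :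
    Integrable (fun z : Fin n → ℝ => z i) (Measure.pi (fun _ : Fin n => gaussianReal 0 1)) ∧
    ∫ z : Fin n → ℝ, z i ∂(Measure.pi (fun _ : Fin n => gaussianReal 0 1)) = 0 := by
  constructor
  · have : MemLp (fun z : Fin n → ℝ => z i) 1 (Measure.pi (fun _ : Fin n => gaussianReal 0 1)) :=
      (memLp_id_gaussianReal' (μ := 0) (v := 1) 1 (by simp)).comp_measurePreserving
        (measurePreserving_eval _ i)
    exact memLp_one_iff_integrable.1 this
  · have h2 := integral_comp_eval (μ := fun _ : Fin n => gaussianReal 0 1) (i := i)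
      (f := fun x : ℝ => x) (by fun_prop)
    rw [integral_id_gaussianReal] at h2
    exact h2

theorem bilin_int {Ω : Type*} [MeasurableSpace Ω] (P : Measure Ω) {a b : ℕ}
    (f : Ω → Fin a → ℝ) (g : Ω → Fin b → ℝ) (V Q : Matrix (Fin a) (Fin b) ℝ)
    (h : ∀ i j, Integrable (fun ω => f ω i * g ω j) P ∧ ∫ ω, f ω i * g ω j ∂P = V i j) :
    Integrable (fun ω => f ω ⬝ᵥ (Q *ᵥ g ω)) P ∧
      ∫ ω, f ω ⬝ᵥ (Q *ᵥ g ω) ∂P = ∑ i, ∑ j, Q i j * V i j := by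
  have e : ∀ ω, f ω ⬝ᵥ (Q *ᵥ g ω) = ∑ i, ∑ j, Q i j * (f ω i * g ω j) := by
    intro ω
    simp only [dotProduct, mulVec, Finset.mul_sum]
    refine Finset.sum_congr rfl fun i _ => Finset.sum_congr rfl fun j _ => by ring
  have hi : ∀ i j, Integrable (fun ω => Q i j * (f ω i * g ω j)) P :=
    fun i j => (h i j).1.const_mul _
  simp_rw [e]
  refine ⟨integrable_finsetSum _ fun i _ => integrable_finsetSum _ fun j _ => hi i j, ?_⟩
  rw [integral_finsetSum _ fun i _ => integrable_finsetSum _ fun j _ => hi i j]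
  refine Finset.sum_congr rfl fun i _ => ?_
  rw [integral_finsetSum _ fun j _ => hi i j]
  refine Finset.sum_congr rfl fun j _ => ?_
  rw [integral_const_mul, (h i j).2]

theorem risk_eq {n m : ℕ} (G : Matrix (Fin m) (Fin n) ℝ) (Γpr L : Matrix (Fin n) (Fin n) ℝ)
    (Γobs K : Matrix (Fin m) (Fin m) ℝ) (hΓ : Γpr = L * Lᵀ) (hL : L.det ≠ 0)
    (hO : Γobs = K * Kᵀ) (hK : K.det ≠ 0) (S : Matrix (Fin n) (Fin n) ℝ)
    (A : Matrix (Fin n) (Fin m) ℝ) :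
    _root_.bayesRisk (jointMeasure G Γpr Γobs) S A =
      trace (S * ((A * G - 1) * Γpr * (A * G - 1)ᵀ + A * Γobs * Aᵀ)) := by
  let γ := fun n : ℕ => Measure.pi (fun _ : Fin n => gaussianReal 0 1)
  have hmv : ∀ {a b : ℕ} (M : Matrix (Fin a) (Fin b) ℝ), Measurable (fun z : Fin b → ℝ => M *ᵥ z) :=
    fun M => (Continuous.matrix_mulVec continuous_const continuous_id).measurable
  have hJ : jointMeasure G Γpr Γobs = Measure.map
      (fun p : (Fin n → ℝ) × (Fin m → ℝ) => (L *ᵥ p.1, G *ᵥ (L *ᵥ p.1) + K *ᵥ p.2))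
      ((γ n).prod (γ m)) := by
    rw [jointMeasure, gauss_map Γpr L hΓ hL, gauss_map Γobs K hO hK,
      Measure.map_prod_map _ _ (hmv L) (hmv K), Measure.map_map]
    · rfl
    · exact measurable_fst.prodMk (((hmv G).comp measurable_fst).add measurable_snd)
    · exact ((hmv L).comp measurable_fst).prodMk ((hmv K).comp measurable_snd)
  have hmeas : Measurable (fun p : (Fin n → ℝ) × (Fin m → ℝ) => (L *ᵥ p.1, G *ᵥ (L *ᵥ p.1) + K *ᵥ p.2)) :=
    ((hmv L).comp measurable_fst).prodMk
      (((hmv G).comp ((hmv L).comp measurable_fst)).add ((hmv K).comp measurable_snd))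
  rw [_root_.bayesRisk, hJ, integral_map hmeas.aemeasurable (by
    apply Continuous.aestronglyMeasurable
    fun_prop)]
  set M := (A * G - 1) * L with hM
  set N := A * K with hN
  have e : ∀ p : (Fin n → ℝ) × (Fin m → ℝ),
      (A *ᵥ (G *ᵥ (L *ᵥ p.1) + K *ᵥ p.2) - L *ᵥ p.1) ⬝ᵥ
        (S *ᵥ (A *ᵥ (G *ᵥ (L *ᵥ p.1) + K *ᵥ p.2) - L *ᵥ p.1)) =
      p.1 ⬝ᵥ ((Mᵀ * S * M) *ᵥ p.1) + p.1 ⬝ᵥ ((Mᵀ * S * N) *ᵥ p.2) +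
      p.2 ⬝ᵥ ((Nᵀ * S * M) *ᵥ p.1) + p.2 ⬝ᵥ ((Nᵀ * S * N) *ᵥ p.2) := by
    intro p
    have h1 : A *ᵥ (G *ᵥ (L *ᵥ p.1) + K *ᵥ p.2) - L *ᵥ p.1 = M *ᵥ p.1 + N *ᵥ p.2 := by
      rw [hM, hN, Matrix.sub_mul, Matrix.one_mul, sub_mulVec, mulVec_add]
      simp only [mulVec_mulVec, Matrix.mul_assoc]
      abel
    have h2 : ∀ {a b : ℕ} (X : Matrix (Fin n) (Fin a) ℝ) (Y : Matrix (Fin n) (Fin b) ℝ) (u v),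
        u ⬝ᵥ ((Xᵀ * S * Y) *ᵥ v) = (X *ᵥ u) ⬝ᵥ (S *ᵥ (Y *ᵥ v)) := by
      intro a b X Y u v
      rw [← mulVec_mulVec, ← mulVec_mulVec, dotProduct_mulVec, vecMul_transpose]
    rw [h1, h2, h2, h2, h2, mulVec_add, add_dotProduct, dotProduct_add, dotProduct_add]
    ring
  simp_rw [e]
  have i1 := bilin_int ((γ n).prod (γ m)) (fun p => p.1) (fun p => p.1) 1 (Mᵀ * S * M) (by
    intro i j
    refine ⟨(std_mom n i j).1.comp_fst _, ?_⟩
    rw [integral_fun_fst (fun z : Fin n → ℝ => z i * z j), (std_mom n i j).2]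
    simp [γ, Matrix.one_apply])
  have i4 := bilin_int ((γ n).prod (γ m)) (fun p => p.2) (fun p => p.2) 1 (Nᵀ * S * N) (by
    intro i j
    refine ⟨(std_mom m i j).1.comp_snd _, ?_⟩
    rw [integral_fun_snd (fun z : Fin m → ℝ => z i * z j), (std_mom m i j).2]
    simp [γ, Matrix.one_apply])
  have i2 := bilin_int ((γ n).prod (γ m)) (fun p => p.1) (fun p => p.2) 0 (Mᵀ * S * N) (by
    intro i j
    refine ⟨(std_mean n i).1.mul_prod (std_mean m j).1, ?_⟩
    rw [integral_prod_mul (fun z : Fin n → ℝ => z i) (fun z : Fin m → ℝ => z j),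
      (std_mean n i).2]
    simp)
  have i3 := bilin_int ((γ n).prod (γ m)) (fun p => p.2) (fun p => p.1) 0 (Nᵀ * S * M) (by
    intro i j
    have hc : ∀ p : (Fin n → ℝ) × (Fin m → ℝ), p.2 i * p.1 j = p.1 j * p.2 i :=
      fun p => mul_comm _ _
    simp_rw [hc]
    refine ⟨(std_mean n j).1.mul_prod (std_mean m i).1, ?_⟩
    rw [integral_prod_mul (fun z : Fin n → ℝ => z j) (fun z : Fin m → ℝ => z i),
      (std_mean n j).2]
    simp)
  have i12 := i1.1.add i2.1
  have i123 := i12.add i3.1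
  rw [integral_add (by exact i123) i4.1, integral_add (by exact i12) i3.1,
    integral_add i1.1 i2.1, i1.2, i2.2, i3.2, i4.2]
  have ht : ∀ {a : ℕ} (X : Matrix (Fin a) (Fin a) ℝ),
      ∑ i, ∑ j, X i j * (1 : Matrix (Fin a) (Fin a) ℝ) i j = trace X := by
    intro a X; simp [Matrix.one_apply, trace]
  rw [ht, ht]
  simp only [Matrix.zero_apply, mul_zero, Finset.sum_const_zero, add_zero]
  rw [Matrix.mul_add, trace_add, Matrix.mul_assoc Mᵀ, Matrix.mul_assoc Nᵀ, trace_mul_comm Mᵀ,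
    trace_mul_comm Nᵀ, hΓ, hO, hM, hN]
  simp only [transpose_mul, Matrix.mul_assoc]

end Gaussian

theorem coord_risk {n : ℕ} (δ : Fin n → ℝ) (C : Matrix (Fin n) (Fin n) ℝ) :
    trace ((1 + diagonal (fun i => δ i ^ 2)) *
      (((1 - C) * diagonal (fun i => δ i ^ 2) - 1) * ((1 - C) * diagonal (fun i => δ i ^ 2) - 1)ᵀ +
        (1 - C) * diagonal (fun i => δ i ^ 2) * (1 - C)ᵀ)) =
    n + ∑ i, ∑ j, ((if i = j then δ j ^ 3 else 0) -
      √(1 + δ i ^ 2) * C i j * (δ j * √(1 + δ j ^ 2))) ^ 2 := by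
  have h1 : (1 : Matrix (Fin n) (Fin n) ℝ) + diagonal (fun i => δ i ^ 2) =
      diagonal (fun i => 1 + δ i ^ 2) := by
    rw [← diagonal_one, diagonal_add]
  have hn : (n : ℝ) = ∑ i : Fin n, ∑ j : Fin n, if i = j then (1:ℝ) else 0 := by simp
  rw [h1, hn, ← Finset.sum_add_distrib, trace]
  refine Finset.sum_congr rfl fun i _ => ?_
  rw [← Finset.sum_add_distrib, diag_apply, diagonal_mul, Matrix.add_apply, Matrix.mul_apply,
    Matrix.mul_apply, ← Finset.sum_add_distrib, Finset.mul_sum]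
  refine Finset.sum_congr rfl fun j _ => ?_
  simp only [transpose_apply, mul_diagonal, Matrix.sub_apply, Matrix.one_apply]
  have hi : √(1 + δ i ^ 2) ^ 2 = 1 + δ i ^ 2 := Real.sq_sqrt (by positivity)
  have hj : √(1 + δ j ^ 2) ^ 2 = 1 + δ j ^ 2 := Real.sq_sqrt (by positivity)
  split_ifs with h
  · subst h
    generalize √(1 + δ i ^ 2) = s at *
    have : s * C i i * (δ i * s) = s ^ 2 * C i i * δ i := by ring
    rw [this, hi]; ring
  · have : (0 - √(1 + δ i ^ 2) * C i j * (δ j * √(1 + δ j ^ 2))) ^ 2 =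
      √(1 + δ i ^ 2) ^ 2 * √(1 + δ j ^ 2) ^ 2 * (C i j * δ j) ^ 2 := by ring
    rw [this, hi, hj]; ring

theorem trace_reduce {n m : ℕ} (G : Matrix (Fin m) (Fin n) ℝ) (W H C Γpr : Matrix (Fin n) (Fin n) ℝ)
    (Γobs : Matrix (Fin m) (Fin m) ℝ) (ho : IsUnit Γobs.det) (hsym : Γobsᵀ = Γobs)
    (hH : H = Gᵀ * Γobs⁻¹ * G) (Δ : Matrix (Fin n) (Fin n) ℝ)
    (hpr : Γpr = W * Wᵀ) (hW : IsUnit W.det) (hΔ : Wᵀ * H * W = Δ) (A : Matrix (Fin n) (Fin m) ℝ)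
    (hA : A = (Γpr - W * C * Wᵀ) * Gᵀ * Γobs⁻¹) :
    trace ((H + Γpr⁻¹) * ((A * G - 1) * Γpr * (A * G - 1)ᵀ + A * Γobs * Aᵀ)) =
    trace ((1 + Δ) * (((1 - C) * Δ - 1) * ((1 - C) * Δ - 1)ᵀ + (1 - C) * Δ * (1 - C)ᵀ)) := by
  have hWt : IsUnit Wᵀ.det := by rwa [det_transpose]
  have hA2 : A = W * (1 - C) * Wᵀ * Gᵀ * Γobs⁻¹ := by
    rw [hA, hpr, Matrix.mul_sub W, Matrix.sub_mul (W * 1), Matrix.mul_one]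
  have hAG : (A * G - 1) * W = W * ((1 - C) * Δ - 1) := by
    rw [hA2, ← hΔ, hH, Matrix.sub_mul (_ * G), Matrix.mul_sub W (_ * _), Matrix.mul_one, Matrix.one_mul]
    simp only [Matrix.mul_assoc]
  have h1 : (A * G - 1) * Γpr * (A * G - 1)ᵀ =
      W * (((1 - C) * Δ - 1) * ((1 - C) * Δ - 1)ᵀ) * Wᵀ := by
    have : (A * G - 1) * Γpr * (A * G - 1)ᵀ = ((A * G - 1) * W) * ((A * G - 1) * W)ᵀ := by
      rw [hpr, transpose_mul]; simp only [Matrix.mul_assoc]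
    rw [this, hAG, transpose_mul]; simp only [Matrix.mul_assoc]
  have h2 : A * Γobs * Aᵀ = W * ((1 - C) * Δ * (1 - C)ᵀ) * Wᵀ := by
    have e1 : A * Γobs = W * (1 - C) * Wᵀ * Gᵀ := by
      rw [hA2, Matrix.mul_assoc, nonsing_inv_mul _ ho, Matrix.mul_one]
    have e2 : Aᵀ = Γobs⁻¹ * G * W * (1 - C)ᵀ * Wᵀ := by
      rw [hA2]
      simp only [transpose_mul, transpose_nonsing_inv, hsym, transpose_transpose, Matrix.mul_assoc]
    rw [e1, e2, ← hΔ, hH]; simp only [Matrix.mul_assoc]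
  have h3 : Wᵀ * (H + Γpr⁻¹) * W = 1 + Δ := by
    rw [Matrix.mul_add, Matrix.add_mul, hΔ, hpr, Matrix.mul_inv_rev, ← Matrix.mul_assoc,
      mul_nonsing_inv _ hWt, Matrix.one_mul, nonsing_inv_mul _ hW, add_comm]
  rw [h1, h2, ← h3, ← Matrix.add_mul, ← Matrix.mul_add]
  generalize ((1 - C) * Δ - 1) * ((1 - C) * Δ - 1)ᵀ + (1 - C) * Δ * (1 - C)ᵀ = X
  have e1 : (H + Γpr⁻¹) * (W * X * Wᵀ) = ((H + Γpr⁻¹) * W * X) * Wᵀ := by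
    simp only [Matrix.mul_assoc]
  rw [e1, trace_mul_comm]
  simp only [Matrix.mul_assoc]

/-- Theorem 4.2 (i): `Â* = Γ̂pos Gᵀ Γobs⁻¹` belongs to the class `𝓐̂_r` and minimizes the
Bayes risk `E‖A y − x‖²_{Γpos⁻¹}` over `𝓐̂_r = {(Γpr − B) Gᵀ Γobs⁻¹ : rank B ≤ r}`. -/
theorem optimal_low_rank_update_posterior_mean
    (n m r : ℕ) (hn : 0 < n) (hm : 0 < m) (hr : r ≤ n)
    (G : Matrix (Fin m) (Fin n) ℝ)
    (Γobs : Matrix (Fin m) (Fin m) ℝ) (hobs : Γobs.PosDef)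
    (Γpr : Matrix (Fin n) (Fin n) ℝ) (hpr : Γpr.PosDef)
    (H Γpos : Matrix (Fin n) (Fin n) ℝ)
    (hH : H = Gᵀ * Γobs⁻¹ * G)
    (hΓpos : Γpos = (H + Γpr⁻¹)⁻¹)
    (δ : Fin n → ℝ) (w : Fin n → Fin n → ℝ)
    (hδ : ∀ i, 0 ≤ δ i)
    (hord : ∀ i j : Fin n, i ≤ j → (δ j) ^ 2 ≤ (δ i) ^ 2)
    (heig : ∀ i, H *ᵥ w i = (δ i) ^ 2 • (Γpr⁻¹ *ᵥ w i))
    (hnorm : ∀ i j, w i ⬝ᵥ (Γpr⁻¹ *ᵥ w j) = if i = j then (1:ℝ) else 0)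
    (Γhat : Matrix (Fin n) (Fin n) ℝ)
    (hΓhat : Γhat = Γpr - ∑ i ∈ Finset.univ.filter (fun i : Fin n => (i : ℕ) < r),
      ((δ i) ^ 2 / (1 + (δ i) ^ 2)) • vecMulVec (w i) (w i))
    (Ahat : Matrix (Fin n) (Fin m) ℝ)
    (hAhat : Ahat = Γhat * Gᵀ * Γobs⁻¹) :
    (∃ B : Matrix (Fin n) (Fin n) ℝ, B.rank ≤ r ∧ Ahat = (Γpr - B) * Gᵀ * Γobs⁻¹) ∧
      ∀ B : Matrix (Fin n) (Fin n) ℝ, B.rank ≤ r →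
        bayesRisk (jointMeasure G Γpr Γobs) Γpos⁻¹ Ahat ≤
          bayesRisk (jointMeasure G Γpr Γobs) Γpos⁻¹ ((Γpr - B) * Gᵀ * Γobs⁻¹) := by
  let W : Matrix (Fin n) (Fin n) ℝ := Matrix.of fun a i => w i a
  have ent : ∀ (X : Matrix (Fin n) (Fin n) ℝ) i j, (Wᵀ * (X * W)) i j = w i ⬝ᵥ (X *ᵥ w j) :=
    fun X i j => rfl
  have hWW : Wᵀ * (Γpr⁻¹ * W) = 1 := by
    ext i j
    rw [ent, hnorm, Matrix.one_apply]
  have hprdet : IsUnit Γpr.det := isUnit_iff_ne_zero.2 hpr.det_pos.ne'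
  have hobsdet : IsUnit Γobs.det := isUnit_iff_ne_zero.2 hobs.det_pos.ne'
  have hprW : Γpr = W * Wᵀ := by
    have h1 : Γpr⁻¹ * W * Wᵀ = 1 := mul_eq_one_comm.1 hWW
    have h2 : Γpr * (Γpr⁻¹ * W * Wᵀ) = W * Wᵀ := by
      rw [← Matrix.mul_assoc, ← Matrix.mul_assoc, mul_nonsing_inv _ hprdet, Matrix.one_mul]
    rw [← h2, h1, Matrix.mul_one]
  have hWdet : IsUnit W.det := by
    refine isUnit_iff_ne_zero.2 fun h0 => hprdet.ne_zero ?_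
    rw [hprW, det_mul, h0, zero_mul]
  have hWtdet : IsUnit Wᵀ.det := by rwa [det_transpose]
  have hΔ : Wᵀ * H * W = diagonal (fun i => δ i ^ 2) := by
    ext i j
    rw [Matrix.mul_assoc, ent, heig, dotProduct_smul, hnorm, diagonal_apply]
    split_ifs with h
    · simp [h]
    · simp
  obtain ⟨K, hKdet, hOK⟩ : ∃ K : Matrix (Fin m) (Fin m) ℝ, K.det ≠ 0 ∧ Γobs = K * Kᵀ := by
    obtain ⟨Y, hY⟩ := psd_factor Γobs hobs
    refine ⟨Yᵀ, fun h0 => hobsdet.ne_zero ?_, by rw [transpose_transpose]; exact hY⟩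
    rw [hY, det_mul, h0, zero_mul]
  have hsym : Γobsᵀ = Γobs := by rw [hOK, transpose_mul, transpose_transpose]
  have hS : Γpos⁻¹ = H + Γpr⁻¹ := by
    rw [hΓpos, nonsing_inv_nonsing_inv]
    have h3 : Wᵀ * (H + Γpr⁻¹) * W = diagonal (fun i => 1 + δ i ^ 2) := by
      rw [Matrix.mul_add, Matrix.add_mul, hΔ, Matrix.mul_assoc Wᵀ Γpr⁻¹ W, hWW, ← diagonal_one,
        diagonal_add]
      congr 1; ext i; ring
    refine isUnit_iff_ne_zero.2 fun h0 => ?_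
    have h4 := congrArg det h3
    rw [det_mul, det_mul, h0, det_diagonal, mul_zero, zero_mul] at h4
    exact (Finset.prod_pos fun i _ => (by positivity : (0:ℝ) < 1 + δ i ^ 2)).ne h4
  have key : ∀ C : Matrix (Fin n) (Fin n) ℝ,
      bayesRisk (jointMeasure G Γpr Γobs) Γpos⁻¹ ((Γpr - W * C * Wᵀ) * Gᵀ * Γobs⁻¹) =
      n + ∑ i, ∑ j, ((if i = j then δ j ^ 3 else 0) -
        √(1 + δ i ^ 2) * C i j * (δ j * √(1 + δ j ^ 2))) ^ 2 := by
    intro C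
    rw [risk_eq G Γpr W Γobs K hprW hWdet.ne_zero hOK hKdet, hS,
      trace_reduce G W H C Γpr Γobs hobsdet hsym hH _ hprW hWdet hΔ _ rfl, coord_risk]
  let c : Fin n → ℝ := fun i => if (i : ℕ) < r then δ i ^ 2 / (1 + δ i ^ 2) else 0
  have hB : ∑ i ∈ Finset.univ.filter (fun i : Fin n => (i : ℕ) < r),
      ((δ i) ^ 2 / (1 + (δ i) ^ 2)) • vecMulVec (w i) (w i) = W * diagonal c * Wᵀ := by
    ext a b
    rw [Matrix.sum_apply, Finset.sum_filter, Matrix.mul_apply]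
    refine Finset.sum_congr rfl fun i _ => ?_
    rw [mul_diagonal]
    simp only [c, W, transpose_apply, of_apply, Matrix.smul_apply, vecMulVec_apply, smul_eq_mul]
    split_ifs
    · ring
    · ring
  have hA : Ahat = (Γpr - W * diagonal c * Wᵀ) * Gᵀ * Γobs⁻¹ := by rw [hAhat, hΓhat, hB]
  refine ⟨⟨W * diagonal c * Wᵀ, ?_, hA⟩, ?_⟩
  · refine (rank_mul_le_left _ _).trans ((rank_mul_le_right _ _).trans ?_)
    rw [rank_diagonal, Fintype.card_subtype]
    calc _ ≤ (Finset.univ.filter (fun i : Fin n => (i : ℕ) < r)).card := by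
          apply Finset.card_le_card
          intro i hi
          simp only [Finset.mem_filter, Finset.mem_univ, true_and, c] at hi ⊢
          by_contra h
          exact hi (if_neg h)
      _ ≤ r := by rw [Fin.card_filter_val_lt]; exact min_le_right _ _
  · intro B hBr
    have hBC : B = W * (W⁻¹ * B * Wᵀ⁻¹) * Wᵀ := by
      have : W * (W⁻¹ * B * Wᵀ⁻¹) * Wᵀ = (W * W⁻¹) * B * (Wᵀ⁻¹ * Wᵀ) := by
        simp only [Matrix.mul_assoc]
      rw [this, mul_nonsing_inv _ hWdet, nonsing_inv_mul _ hWtdet, Matrix.one_mul, Matrix.mul_one]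
    set C := W⁻¹ * B * Wᵀ⁻¹ with hC
    have hCr : C.rank ≤ r :=
      (rank_mul_le_left _ _).trans ((rank_mul_le_right _ _).trans hBr)
    rw [hA, hBC, key, key]
    refine add_le_add_right ?_ _
    have hE := ey (r := r) (fun i => δ i ^ 3) (fun i j hij => by
        have := pow_le_pow_left₀ (sq_nonneg _) (hord i j hij) 3
        calc (δ j ^ 3) ^ 2 = (δ j ^ 2) ^ 3 := by ring
          _ ≤ (δ i ^ 2) ^ 3 := this
          _ = (δ i ^ 3) ^ 2 := by ring)
      (diagonal (fun i => √(1 + δ i ^ 2)) * C * diagonal (fun j => δ j * √(1 + δ j ^ 2)))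
      ((rank_mul_le_left _ _).trans ((rank_mul_le_right _ _).trans hCr))
    simp only [mul_diagonal, diagonal_mul] at hE
    refine le_trans (le_of_eq ?_) hE
    refine Finset.sum_congr rfl fun i _ => ?_
    rw [Finset.sum_eq_single i]
    · have hi : √(1 + δ i ^ 2) ^ 2 = 1 + δ i ^ 2 := Real.sq_sqrt (by positivity)
      have hpos : (1 + δ i ^ 2) ≠ 0 := by positivity
      rw [if_pos rfl, diagonal_apply_eq]
      have e : √(1 + δ i ^ 2) * c i * (δ i * √(1 + δ i ^ 2)) = √(1 + δ i ^ 2) ^ 2 * c i * δ i := by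
        ring
      rw [e, hi]
      simp only [c]
      split_ifs
      · field_simp
        ring
      · ring
    · intro j _ hj
      rw [if_neg hj.symm, diagonal_apply_ne _ hj.symm]
      ring
    · simp
end

section
/- Let Γ_y = Γ_obs + G Γ_pr Gᵀ, and let S_pos and S_y be invertible matrices with Γ_pos = S_pos S_posᵀ and Γ_y = S_y S_yᵀ. Then for every real n×m matrix A, the expected squared error to the posterior mean satisfies E[ ‖A y − μ_pos(y)‖²_{Γ_pos⁻¹} ] = ‖ S_pos⁻¹ ( A − Γ_pos Gᵀ Γ_obs⁻¹ ) S_y ‖²_F, where ‖·‖_F is the Frobenius norm and the expectation is over the marginal law of y, which is N(0, Γ_y). -/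
open Matrix MeasureTheory Finset

/-- The squared Frobenius norm of a matrix. -/
def frobSq {n m : ℕ} (M : Matrix (Fin n) (Fin m) ℝ) : ℝ :=
  ∑ i, ∑ j, (M i j) ^ 2

open ProbabilityTheory in
lemma aux_integrable (q : ℕ) : Integrable (fun x : ℝ => gaussianPDFReal 0 1 x * x ^ q) := by
  have h : Integrable (fun x : ℝ => x ^ q) (gaussianReal 0 1) := by
    have := (memLp_id_gaussianReal (μ := 0) (v := 1) (q : NNReal)).integrable_norm_pow'
    refine (integrable_norm_iff (by fun_prop)).1 ?_
    simpa using this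
  rw [gaussianReal_of_var_ne_zero _ one_ne_zero,
    integrable_withDensity_iff_integrable_smul' (measurable_gaussianPDF _ _)
      (ae_of_all _ fun _ => gaussianPDF_lt_top)] at h
  simpa using h

open ProbabilityTheory in
lemma aux_m0 : ∫ x : ℝ, gaussianPDFReal 0 1 x = 1 :=
  integral_gaussianPDFReal_eq_one 0 one_ne_zero

open ProbabilityTheory in
lemma aux_m1 : ∫ x : ℝ, gaussianPDFReal 0 1 x * x = 0 := by
  have h := integral_id_gaussianReal (μ := 0) (v := 1)
  rw [integral_gaussianReal_eq_integral_smul one_ne_zero] at h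
  simpa using h

open ProbabilityTheory in
lemma aux_m2 : ∫ x : ℝ, gaussianPDFReal 0 1 x * (x * x) = 1 := by
  have h := variance_id_gaussianReal (μ := 0) (v := 1)
  rw [variance_eq_integral (by fun_prop)] at h
  simp only [id, integral_id_gaussianReal] at h
  rw [integral_gaussianReal_eq_integral_smul one_ne_zero] at h
  simpa [pow_two] using h

open ProbabilityTheory in
lemma aux_prod {m : ℕ} (j k : Fin m) (z : Fin m → ℝ) :
    (∏ l, gaussianPDFReal 0 1 (z l)) * (z j * z k) =
    ∏ l, (fun (l : Fin m) (x : ℝ) => gaussianPDFReal 0 1 x *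
      ((if l = j then x else 1) * (if l = k then x else 1))) l (z l) := by
  simp only [Finset.prod_mul_distrib, Finset.prod_ite_eq', Finset.mem_univ, if_true]

open ProbabilityTheory in
lemma aux_moment_int {m : ℕ} (j k : Fin m) :
    Integrable (fun z : Fin m → ℝ => (∏ l, gaussianPDFReal 0 1 (z l)) * (z j * z k)) := by
  simp_rw [aux_prod]
  refine Integrable.fintype_prod (f := fun (l : Fin m) (x : ℝ) => gaussianPDFReal 0 1 x *
      ((if l = j then x else 1) * (if l = k then x else 1))) fun l => ?_
  have h0 := aux_integrable 0
  have h1 := aux_integrable 1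
  have h2 := aux_integrable 2
  simp only [pow_zero, pow_one, pow_two, mul_one] at h0 h1 h2
  by_cases hj : l = j <;> by_cases hk : l = k <;> simp only [hj, hk, if_true, if_false, mul_one, one_mul] <;>
    first | assumption | (split_ifs <;> simpa)

open ProbabilityTheory in
lemma aux_moment {m : ℕ} (j k : Fin m) :
    ∫ z : Fin m → ℝ, (∏ l, gaussianPDFReal 0 1 (z l)) * (z j * z k) =
      if j = k then 1 else 0 := by
  simp_rw [aux_prod]
  rw [integral_fintype_prod_volume_eq_prod (fun (l : Fin m) (x : ℝ) => gaussianPDFReal 0 1 x *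
      ((if l = j then x else 1) * (if l = k then x else 1)))]
  split_ifs with h
  · subst h
    refine Finset.prod_eq_one fun l _ => ?_
    by_cases hj : l = j
    · simpa [hj] using aux_m2
    · simpa [hj] using aux_m0
  · refine Finset.prod_eq_zero (Finset.mem_univ j) ?_
    simpa [h] using aux_m1

open ProbabilityTheory in
lemma aux_quad {n m : ℕ} (B : Matrix (Fin n) (Fin m) ℝ) :
    ∫ z : Fin m → ℝ, (∏ l, gaussianPDFReal 0 1 (z l)) * ((B *ᵥ z) ⬝ᵥ (B *ᵥ z)) = frobSq B := by
  have h : ∀ z : Fin m → ℝ, (∏ l, gaussianPDFReal 0 1 (z l)) * ((B *ᵥ z) ⬝ᵥ (B *ᵥ z)) =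
      ∑ i, ∑ j, ∑ k, (B i j * B i k) * ((∏ l, gaussianPDFReal 0 1 (z l)) * (z j * z k)) := by
    intro z
    simp only [dotProduct, mulVec, Finset.sum_mul_sum]
    simp only [Finset.mul_sum]
    refine Finset.sum_congr rfl fun i _ => Finset.sum_congr rfl fun j _ =>
      Finset.sum_congr rfl fun k _ => ?_
    ring
  simp_rw [h]
  have hi : ∀ i j k, Integrable (fun z : Fin m → ℝ =>
      (B i j * B i k) * ((∏ l, gaussianPDFReal 0 1 (z l)) * (z j * z k))) :=
    fun i j k => (aux_moment_int j k).const_mul _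
  rw [integral_finsetSum _ fun i _ => integrable_finsetSum _ fun j _ =>
    integrable_finsetSum _ fun k _ => hi i j k]
  unfold frobSq
  refine Finset.sum_congr rfl fun i _ => ?_
  rw [integral_finsetSum _ fun j _ => integrable_finsetSum _ fun k _ => hi i j k]
  refine Finset.sum_congr rfl fun j _ => ?_
  rw [integral_finsetSum _ fun k _ => hi i j k]
  simp_rw [integral_const_mul, aux_moment]
  simp [pow_two]

lemma aux_cov {m : ℕ} (S : Matrix (Fin m) (Fin m) ℝ) (hS : IsUnit S.det) (f : (Fin m → ℝ) → ℝ) :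
    ∫ y, f y = ∫ z, |S.det| * f (S *ᵥ z) := by
  have hne : S.det ≠ 0 := hS.ne_zero
  have hmap := Real.map_matrix_volume_pi_eq_smul_volume_pi hne
  have hinj : Function.Injective (Matrix.toLin' S) := by
    intro a b hab
    simp only [Matrix.toLin'_apply] at hab
    exact Matrix.mulVec_injective_iff_isUnit.2 ((Matrix.isUnit_iff_isUnit_det _).2 hS) hab
  have hcont : Continuous (Matrix.toLin' S) := LinearMap.continuous_of_finiteDimensional _
  have he : MeasurableEmbedding (Matrix.toLin' S) := hcont.measurableEmbedding hinj
  have h1 := he.integral_map (μ := volume) f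
  rw [hmap, integral_smul_measure, ENNReal.toReal_ofReal (abs_nonneg _)] at h1
  rw [integral_const_mul]
  simp only [Matrix.toLin'_apply] at h1
  rw [← h1, smul_eq_mul, ← mul_assoc, ← abs_mul, mul_inv_cancel₀ hne]
  simp

open ProbabilityTheory in
lemma aux_density {m : ℕ} (S : Matrix (Fin m) (Fin m) ℝ) (hS : IsUnit S.det) (z : Fin m → ℝ) :
    |S.det| * gaussianDensity 0 (S * Sᵀ) (S *ᵥ z) = ∏ l, gaussianPDFReal 0 1 (z l) := by
  have hne : S.det ≠ 0 := hS.ne_zero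
  have hq : (S *ᵥ z) ⬝ᵥ ((S * Sᵀ)⁻¹ *ᵥ (S *ᵥ z)) = ∑ l, z l ^ 2 := by
    rw [Matrix.mul_inv_rev, Matrix.mulVec_mulVec, Matrix.mul_assoc, Matrix.nonsing_inv_mul _ hS,
      Matrix.mul_one, ← Matrix.transpose_nonsing_inv, Matrix.mulVec_transpose,
      dotProduct_comm, ← Matrix.dotProduct_mulVec, Matrix.mulVec_mulVec,
      Matrix.nonsing_inv_mul _ hS, Matrix.one_mulVec]
    simp [dotProduct, pow_two]
  have hd : (S * Sᵀ).det ^ (-(1:ℝ) / 2) = |S.det|⁻¹ := by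
    rw [Matrix.det_mul, Matrix.det_transpose, neg_div, Real.rpow_neg (mul_self_nonneg _),
      ← Real.sqrt_eq_rpow, Real.sqrt_mul_self_eq_abs]
  have hp : (2 * Real.pi) ^ (-(m : ℝ) / 2) = (√(2 * Real.pi))⁻¹ ^ m := by
    have h0 : (0:ℝ) ≤ 2 * Real.pi := by positivity
    rw [Real.sqrt_eq_rpow, ← Real.rpow_neg h0, ← Real.rpow_natCast, ← Real.rpow_mul h0]
    congr 1; ring
  simp only [gaussianDensity, gaussianPDFReal, sub_zero, hq, hd, hp, Finset.prod_mul_distrib,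
    ← Real.exp_sum]
  have : |S.det| ≠ 0 := abs_ne_zero.2 hne
  simp only [NNReal.coe_one, mul_one, Finset.prod_const, Finset.card_univ, Fintype.card_fin]
  rw [← Finset.sum_div, Finset.sum_neg_distrib]
  field_simp

/-- Equation (A.5): for any matrix `A`, the expected squared error to the posterior mean,
over the marginal law `N(0, Γy)` of the data, equals the squared Frobenius norm
`‖Spos⁻¹ (A − Γpos Gᵀ Γobs⁻¹) Sy‖²_F`. -/
theorem expected_error_to_posterior_mean_eq_frobenius
    (n m : ℕ) (hn : 0 < n) (hm : 0 < m)
    (G : Matrix (Fin m) (Fin n) ℝ)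
    (Γobs : Matrix (Fin m) (Fin m) ℝ) (hobs : Γobs.PosDef)
    (Γpr : Matrix (Fin n) (Fin n) ℝ) (hpr : Γpr.PosDef)
    (Γpos : Matrix (Fin n) (Fin n) ℝ)
    (hΓpos : Γpos = (Gᵀ * Γobs⁻¹ * G + Γpr⁻¹)⁻¹)
    (Γy : Matrix (Fin m) (Fin m) ℝ)
    (hΓy : Γy = Γobs + G * Γpr * Gᵀ)
    (Spos : Matrix (Fin n) (Fin n) ℝ) (hSposInv : IsUnit Spos.det)
    (hSpos : Γpos = Spos * Sposᵀ)
    (Sy : Matrix (Fin m) (Fin m) ℝ) (hSyInv : IsUnit Sy.det)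
    (hSy : Γy = Sy * Syᵀ)
    (μpos : (Fin m → ℝ) → (Fin n → ℝ))
    (hμpos : ∀ y, μpos y = (Γpos * Gᵀ * Γobs⁻¹) *ᵥ y)
    (A : Matrix (Fin n) (Fin m) ℝ) :
    ∫ y, (A *ᵥ y - μpos y) ⬝ᵥ (Γpos⁻¹ *ᵥ (A *ᵥ y - μpos y)) ∂(gaussianMeasure 0 Γy) =
      frobSq (Spos⁻¹ * (A - Γpos * Gᵀ * Γobs⁻¹) * Sy) := by
  have hdm : Measurable fun x => ENNReal.ofReal (gaussianDensity 0 Γy x) := by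
    have : Continuous (gaussianDensity 0 Γy) := by
      unfold gaussianDensity
      simp only [dotProduct, mulVec]
      fun_prop
    exact this.measurable.ennreal_ofReal
  have hnn : ∀ z, 0 ≤ gaussianDensity 0 Γy (Sy *ᵥ z) := by
    intro z
    have h := aux_density Sy hSyInv z
    rw [← hSy] at h
    have h2 : 0 ≤ |Sy.det| * gaussianDensity 0 Γy (Sy *ᵥ z) := by
      rw [h]
      exact Finset.prod_nonneg fun l _ => ProbabilityTheory.gaussianPDFReal_nonneg _ _ _
    exact nonneg_of_mul_nonneg_right h2 (abs_pos.2 hSyInv.ne_zero)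
  unfold gaussianMeasure
  rw [integral_withDensity_eq_integral_toReal_smul hdm (ae_of_all _ fun _ => ENNReal.ofReal_lt_top),
    aux_cov Sy hSyInv, ← aux_quad]
  congr 1
  ext z
  rw [ENNReal.toReal_ofReal (hnn z), smul_eq_mul, ← mul_assoc, ← aux_density Sy hSyInv z, ← hSy]
  congr 1
  rw [hμpos, ← Matrix.sub_mulVec]
  generalize A - Γpos * Gᵀ * Γobs⁻¹ = D
  rw [hSpos, Matrix.mul_inv_rev, ← Matrix.mulVec_mulVec, ← Matrix.mulVec_mulVec,
    ← Matrix.transpose_nonsing_inv, Matrix.dotProduct_mulVec, Matrix.vecMul_transpose,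
    ← Matrix.mulVec_mulVec]
end

section
/- Let D = diag(d₁²,…,dₙ²) with d₁² ≥ d₂² ≥ ⋯ ≥ dₙ² ≥ 0, let f ∈ 𝓤, and define 𝒥 : ℝ^{n×r} → ℝ by 𝒥(U) = Σ_{i=1}^{n} f(σᵢ), where σ₁,…,σₙ are the generalized eigenvalues of the pencil (U Uᵀ + I, D + I). Then 𝒥 attains a global minimum on ℝ^{n×r}, and there is a minimizer Û of 𝒥 such that Û Ûᵀ = Σ_{i=1}^{r} dᵢ² eᵢ eᵢᵀ, where e₁,…,eₙ are the standard basis vectors of ℝⁿ. -/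
open Matrix Finset

/-- `σ` enumerates (with multiplicity) the generalized eigenvalues of the pencil `(A, B)`,
i.e. the eigenvalues of `B⁻¹ * A`. -/
def IsGenEigs {n : ℕ} (A B : Matrix (Fin n) (Fin n) ℝ) (σ : Fin n → ℝ) : Prop :=
  (B⁻¹ * A).charpoly = ∏ i : Fin n, (Polynomial.X - Polynomial.C (σ i))

/-- Membership in the class 𝓤. -/
def MemU (f : ℝ → ℝ) : Prop :=
  ∃ f' : ℝ → ℝ,
    (∀ x ∈ Set.Ioi (0:ℝ), HasDerivAt f (f' x) x) ∧
    ContinuousOn f' (Set.Ioi (0:ℝ)) ∧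
    (∀ x ∈ Set.Ioi (0:ℝ), x ≠ 1 → f' x * (1 - x) < 0) ∧
    Filter.Tendsto f Filter.atTop Filter.atTop

lemma aux_interlace {n r : ℕ} (Q : Matrix (Fin n) (Fin n) ℝ) (hQ : Q * Qᵀ = 1)
    (lam b : Fin n → ℝ) (W : Matrix (Fin n) (Fin r) ℝ)
    (hM : diagonal b + W * Wᵀ = Q * diagonal lam * Qᵀ)
    (hb : Monotone b) (p : Equiv.Perm (Fin n)) (hp : Monotone (lam ∘ p))
    (k : Fin n) (hk : (k : ℕ) + r < n) : lam (p k) ≤ b ⟨k + r, hk⟩ := by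
  by_contra! hlt
  let L1 : (Fin n → ℝ) →ₗ[ℝ] ({j : Fin n // j < k} → ℝ) :=
    (LinearMap.funLeft ℝ ℝ (fun j : {j : Fin n // j < k} => p j.1)).comp (Matrix.mulVecLin Qᵀ)
  let L2 : (Fin n → ℝ) →ₗ[ℝ] ({j : Fin n // (⟨k + r, hk⟩ : Fin n) < j} → ℝ) :=
    LinearMap.funLeft ℝ ℝ (fun j : {j : Fin n // (⟨k + r, hk⟩ : Fin n) < j} => j.1)
  let L := L1.prod (L2.prod (Matrix.mulVecLin Wᵀ))
  have hker : LinearMap.ker L ≠ ⊥ := by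
    apply LinearMap.ker_ne_bot_of_finrank_lt
    rw [Module.finrank_prod, Module.finrank_prod]
    simp only [Module.finrank_fintype_fun_eq_card, Fintype.card_fin]
    rw [Fintype.card_subtype, Fintype.card_subtype, Finset.filter_gt_eq_Iio,
      Finset.filter_lt_eq_Ioi, Fin.card_Iio, Fin.card_Ioi]
    simp only
    omega
  obtain ⟨x, hx, hx0⟩ := (Submodule.ne_bot_iff _).1 hker
  rw [LinearMap.mem_ker] at hx
  have h1 : ∀ j < k, (Qᵀ *ᵥ x) (p j) = 0 := fun j hj =>
    congrFun (congrArg Prod.fst hx) ⟨j, hj⟩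
  have h2 : ∀ j : Fin n, (⟨k + r, hk⟩ : Fin n) < j → x j = 0 := fun j hj =>
    congrFun (congrArg (fun z => z.2.1) hx) ⟨j, hj⟩
  have h3 : Wᵀ *ᵥ x = 0 := congrArg (fun z => z.2.2) hx
  set y := Qᵀ *ᵥ x with hy
  have e1 : x ⬝ᵥ ((diagonal b + W * Wᵀ) *ᵥ x) = ∑ j, b j * x j ^ 2 := by
    rw [add_mulVec, ← mulVec_mulVec, h3, mulVec_zero, add_zero]
    simp only [dotProduct, mulVec_diagonal]
    exact Finset.sum_congr rfl fun j _ => by ring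
  have e2 : x ⬝ᵥ ((diagonal b + W * Wᵀ) *ᵥ x) = ∑ j, lam j * y j ^ 2 := by
    rw [hM, ← mulVec_mulVec, ← mulVec_mulVec, dotProduct_mulVec, ← mulVec_transpose, ← hy]
    simp only [dotProduct, mulVec_diagonal]
    exact Finset.sum_congr rfl fun j _ => by ring
  have e3 : ∑ j, x j ^ 2 = ∑ j, y j ^ 2 := by
    have : x ⬝ᵥ ((Q * Qᵀ) *ᵥ x) = y ⬝ᵥ y := by
      rw [← mulVec_mulVec, dotProduct_mulVec, ← mulVec_transpose]
    rw [hQ, one_mulVec] at this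
    simpa [dotProduct, sq] using this
  have e4 : 0 < ∑ j, x j ^ 2 := by
    obtain ⟨j, hj⟩ := Function.ne_iff.1 hx0
    exact Finset.sum_pos' (fun _ _ => sq_nonneg _) ⟨j, Finset.mem_univ _, by have : x j ≠ 0 := hj; positivity⟩
  have e5 : ∑ j, b j * x j ^ 2 ≤ b ⟨k + r, hk⟩ * ∑ j, x j ^ 2 := by
    rw [Finset.mul_sum]
    refine Finset.sum_le_sum fun j _ => ?_
    rcases lt_or_ge (⟨k + r, hk⟩ : Fin n) j with h | h
    · simp [h2 j h]
    · exact mul_le_mul_of_nonneg_right (hb h) (sq_nonneg _)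
  have e6 : lam (p k) * ∑ j, y j ^ 2 ≤ ∑ j, lam j * y j ^ 2 := by
    rw [Finset.mul_sum, ← Equiv.sum_comp p, ← Equiv.sum_comp p (fun j => lam j * y j ^ 2)]
    refine Finset.sum_le_sum fun j _ => ?_
    rcases lt_or_ge j k with h | h
    · simp [h1 j h]
    · exact mul_le_mul_of_nonneg_right (hp h) (sq_nonneg _)
  rw [← e3] at e6
  have := mul_lt_mul_of_pos_right hlt e4
  linarith

lemma aux_sum_eq {n : ℕ} (f : ℝ → ℝ) (a b : Fin n → ℝ)
    (h : ∏ i : Fin n, (Polynomial.X - Polynomial.C (a i)) =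
      ∏ i : Fin n, (Polynomial.X - Polynomial.C (b i))) :
    ∑ i, f (a i) = ∑ i, f (b i) := by
  have key : ∀ c : Fin n → ℝ, (∏ i : Fin n, (Polynomial.X - Polynomial.C (c i))).roots
      = Finset.univ.val.map c := fun c => by
    have := Polynomial.roots_multiset_prod_X_sub_C (Finset.univ.val.map c)
    rwa [Multiset.map_map] at this
  have h2 : Finset.univ.val.map a = Finset.univ.val.map b := by rw [← key, ← key, h]
  have h3 := congrArg (fun m => (Multiset.map f m).sum) h2
  simp only [Multiset.map_map] at h3
  exact h3

lemma aux_f {f : ℝ → ℝ} (hf : MemU f) :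
    AntitoneOn f (Set.Ioc 0 1) ∧ MonotoneOn f (Set.Ici 1) := by
  obtain ⟨f', h1, -, h3, -⟩ := hf
  constructor
  · apply antitoneOn_of_deriv_nonpos (convex_Ioc 0 1)
    · exact fun x hx => (h1 x hx.1).continuousAt.continuousWithinAt
    · intro x hx
      rw [interior_Ioc] at hx
      exact (h1 x hx.1).differentiableAt.differentiableWithinAt
    · intro x hx
      rw [interior_Ioc] at hx
      rw [(h1 x hx.1).deriv]
      have := h3 x hx.1 hx.2.ne
      have := hx.2
      by_contra! hc
      nlinarith
  · apply monotoneOn_of_deriv_nonneg (convex_Ici 1)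
    · exact fun x hx => (h1 x (lt_of_lt_of_le (one_pos : (0:ℝ) < 1) hx)).continuousAt.continuousWithinAt
    · intro x hx
      rw [interior_Ici] at hx
      exact (h1 x (lt_trans (one_pos : (0:ℝ) < 1) hx)).differentiableAt.differentiableWithinAt
    · intro x hx
      rw [interior_Ici] at hx
      have hx' : 1 < x := hx
      rw [(h1 x (lt_trans (one_pos : (0:ℝ) < 1) hx)).deriv]
      have := h3 x (lt_trans (one_pos : (0:ℝ) < 1) hx) hx'.ne'
      by_contra! hc
      nlinarith

lemma aux_f_one {f : ℝ → ℝ} (hf : MemU f) {x : ℝ} (hx : 0 < x) : f 1 ≤ f x := by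
  obtain ⟨h1, h2⟩ := aux_f hf
  rcases le_total x 1 with h | h
  · exact h1 ⟨hx, h⟩ ⟨one_pos, le_rfl⟩ h
  · exact h2 (Set.mem_Ici.2 le_rfl) h h

lemma aux_inv {n : ℕ} (dsq : Fin n → ℝ) (hd : ∀ i, 0 ≤ dsq i) :
    (Matrix.diagonal dsq + 1)⁻¹ = diagonal (fun i => (dsq i + 1)⁻¹) := by
  apply Matrix.inv_eq_right_inv
  rw [← diagonal_one, diagonal_add, diagonal_mul_diagonal]
  congr 1
  funext i
  have := hd i
  exact mul_inv_cancel₀ (by positivity)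

lemma aux_uhat {n r : ℕ} (hr : r ≤ n) (dsq : Fin n → ℝ) (hd : ∀ i, 0 ≤ dsq i) :
    ∃ Uhat : Matrix (Fin n) (Fin r) ℝ,
      Uhat * Uhatᵀ = diagonal (fun i : Fin n => if (i : ℕ) < r then dsq i else 0) := by
  refine ⟨Matrix.of fun i j => if (i : ℕ) = j then √(dsq i) else 0, ?_⟩
  ext i j
  simp only [mul_apply, of_apply, transpose_apply, diagonal_apply]
  by_cases hi : (i : ℕ) < r
  · rw [Finset.sum_eq_single ⟨i, hi⟩]
    · by_cases hij : i = j
      · subst hij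
        simp [hi, Real.mul_self_sqrt (hd i)]
      · have : (j : ℕ) ≠ i := fun h => hij (Fin.ext h.symm)
        simp [hij, this]
    · intro l _ hl
      have : (i : ℕ) ≠ l := fun h => hl (Fin.ext h.symm)
      simp [this]
    · simp
  · rw [Finset.sum_eq_zero]
    · simp [hi]
    · intro l _
      have : (i : ℕ) ≠ l := by have := l.2; omega
      simp [this]

lemma aux_sumdiag {n r : ℕ} (dsq : Fin n → ℝ) :
    ∑ i ∈ Finset.univ.filter (fun i : Fin n => (i : ℕ) < r),
        dsq i • vecMulVec (Pi.single i (1:ℝ)) (Pi.single i (1:ℝ)) =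
      diagonal (fun i : Fin n => if (i : ℕ) < r then dsq i else 0) := by
  ext a c
  simp only [Matrix.sum_apply, Matrix.smul_apply, vecMulVec_apply, Pi.single_apply, smul_eq_mul,
    diagonal_apply, Finset.sum_filter]
  rw [Finset.sum_eq_single a]
  · by_cases h : a = c
    · simp [h]
    · simp [h, Ne.symm h]
  · intro i _ hi
    simp [hi.symm]
  · simp

lemma aux_lower {n r : ℕ} (hr : r ≤ n) (dsq : Fin n → ℝ) (hd : ∀ i, 0 ≤ dsq i)
    (hord : Antitone dsq) (U : Matrix (Fin n) (Fin r) ℝ) (s : Fin n → ℝ)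
    (hs : IsGenEigs (U * Uᵀ + 1) (Matrix.diagonal dsq + 1) s) :
    ∃ t : Fin n → ℝ, (∏ i : Fin n, (Polynomial.X - Polynomial.C (s i)) =
      ∏ i : Fin n, (Polynomial.X - Polynomial.C (t i))) ∧ (∀ i, 0 < t i) ∧
      ∀ (k : Fin n) (hk : (k : ℕ) + r < n), t k ≤ (dsq ⟨k + r, hk⟩ + 1)⁻¹ := by
  have hpos : ∀ i, 0 < dsq i + 1 := fun i => by have := hd i; positivity
  set b : Fin n → ℝ := fun i => (dsq i + 1)⁻¹ with hbdef
  have hbpos : ∀ i, 0 < b i := fun i => inv_pos.2 (hpos i)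
  have hb : Monotone b := fun i j hij =>
    inv_anti₀ (hpos j) (by have := hord hij; linarith)
  let S : Matrix (Fin n) (Fin n) ℝ := diagonal fun i => √(b i)
  have hSS : S * S = diagonal b := by
    simp only [S, diagonal_mul_diagonal]
    congr 1
    funext i
    exact Real.mul_self_sqrt (hbpos i).le
  have hSt : Sᵀ = S := diagonal_transpose _
  have hMeq : S * (U * Uᵀ + 1) * S = diagonal b + (S * U) * (S * U)ᵀ := by
    rw [transpose_mul, hSt, mul_add, add_mul, mul_one, hSS, add_comm]
    simp only [Matrix.mul_assoc]
  have hPD : (diagonal b + (S * U) * (S * U)ᵀ).PosDef := by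
    apply Matrix.PosDef.add_posSemidef
    · exact Matrix.PosDef.diagonal hbpos
    · have := Matrix.posSemidef_self_mul_conjTranspose (S * U)
      rwa [conjTranspose_eq_transpose_of_trivial] at this
  have hchar : ((Matrix.diagonal dsq + 1)⁻¹ * (U * Uᵀ + 1)).charpoly =
      (diagonal b + (S * U) * (S * U)ᵀ).charpoly := by
    rw [aux_inv dsq hd, ← hMeq, ← hSS, Matrix.mul_assoc, Matrix.charpoly_mul_comm]
  have hH := hPD.isHermitian
  let p := Tuple.sort hH.eigenvalues
  refine ⟨hH.eigenvalues ∘ p, ?_, fun i => hPD.eigenvalues_pos _, ?_⟩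
  · rw [← hs, hchar, hH.charpoly_eq]
    exact (Equiv.prod_comp p (fun i => Polynomial.X - Polynomial.C (hH.eigenvalues i))).symm
  · intro k hk
    refine aux_interlace (hH.eigenvectorUnitary : Matrix (Fin n) (Fin n) ℝ) ?_ hH.eigenvalues b
      (S * U) ?_ hb p (Tuple.monotone_sort _) k hk
    · have := Unitary.coe_mul_star_self hH.eigenvectorUnitary
      rwa [Unitary.coe_star, star_eq_conjTranspose, conjTranspose_eq_transpose_of_trivial] at this
    · have := hH.spectral_theorem
      rw [Unitary.conjStarAlgAut_apply, star_eq_conjTranspose,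
        conjTranspose_eq_transpose_of_trivial] at this
      exact this

/-- Lemma A.1 (i) (approximation lemma): the functional
`𝒥(U) = Σᵢ f(σᵢ)`, with `σᵢ` the generalized eigenvalues of `(U Uᵀ + I, D + I)`, attains
a global minimum, and there is a minimizer `Û` with `Û Ûᵀ = Σ_{i≤r} dᵢ² eᵢ eᵢᵀ`. -/
theorem approximation_lemma_existence
    (n r : ℕ) (hn : 0 < n) (hrpos : 0 < r) (hr : r ≤ n)
    (dsq : Fin n → ℝ) (hd : ∀ i, 0 ≤ dsq i) (hord : Antitone dsq)
    (f : ℝ → ℝ) (hf : MemU f) :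
    ∃ Uhat : Matrix (Fin n) (Fin r) ℝ,
      (Uhat * Uhatᵀ = ∑ i ∈ Finset.univ.filter (fun i : Fin n => (i : ℕ) < r),
        dsq i • vecMulVec (Pi.single i (1:ℝ)) (Pi.single i (1:ℝ))) ∧
      ∀ U : Matrix (Fin n) (Fin r) ℝ, ∀ σ σ' : Fin n → ℝ,
        IsGenEigs (Uhat * Uhatᵀ + 1) (Matrix.diagonal dsq + 1) σ →
        IsGenEigs (U * Uᵀ + 1) (Matrix.diagonal dsq + 1) σ' →
        ∑ i, f (σ i) ≤ ∑ i, f (σ' i) := by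
  obtain ⟨Uhat, hU⟩ := aux_uhat hr dsq hd
  refine ⟨Uhat, hU.trans (aux_sumdiag dsq).symm, ?_⟩
  intro U s s' hs hs'
  have hpos : ∀ i, 0 < dsq i + 1 := fun i => by have := hd i; positivity
  obtain ⟨t, ht, htpos, hint⟩ := aux_lower hr dsq hd hord U s' hs'
  rw [aux_sum_eq f s' t ht]
  let g : Fin n → ℝ := fun i => if (i : ℕ) < r then 1 else (dsq i + 1)⁻¹
  have hg : ∏ i : Fin n, (Polynomial.X - Polynomial.C (s i)) =
      ∏ i : Fin n, (Polynomial.X - Polynomial.C (g i)) := by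
    rw [← hs, ← Matrix.charpoly_diagonal, aux_inv dsq hd, hU, ← diagonal_one, diagonal_add,
      diagonal_mul_diagonal]
    congr 2
    funext i
    have := (hpos i).ne'
    by_cases h : (i : ℕ) < r <;> simp [g, h, this]
  rw [aux_sum_eq f s g hg]
  haveI : NeZero n := ⟨hn.ne'⟩
  rw [← Equiv.sum_comp (Equiv.addRight (Fin.ofNat n r)) (fun i => f (g i))]
  refine Finset.sum_le_sum fun k _ => ?_
  have hv : ((k + Fin.ofNat n r : Fin n) : ℕ) = (k + r) % n := by
    simp [Fin.val_add]
  simp only [Equiv.coe_addRight]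
  by_cases hk : (k : ℕ) + r < n
  · have e : k + Fin.ofNat n r = ⟨k + r, hk⟩ := Fin.ext (by rw [hv, Nat.mod_eq_of_lt hk])
    have e' : g ⟨k + r, hk⟩ = (dsq ⟨k + r, hk⟩ + 1)⁻¹ := by simp [g]
    rw [e, e']
    have h1 : (dsq ⟨k + r, hk⟩ + 1)⁻¹ ≤ 1 := inv_le_one_of_one_le₀ (by linarith [hd ⟨k + r, hk⟩])
    have h2 := hint k hk
    exact (aux_f hf).1 ⟨htpos k, h2.trans h1⟩ ⟨inv_pos.2 (hpos _), h1⟩ h2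
  · have e : ((k + Fin.ofNat n r : Fin n) : ℕ) < r := by
      rw [hv, Nat.mod_eq_sub_mod (by omega), Nat.mod_eq_of_lt (by omega)]
      omega
    have e' : g (k + Fin.ofNat n r) = 1 := by simp only [g, e, if_true]
    rw [e']
    exact aux_f_one hf (htpos k)
end

section
/- Let Γ_pr be an n×n symmetric positive definite matrix. For any real n×k matrix K such that Γ_pr − K Kᵀ is positive definite, there exists a real n×k matrix U with rank(U) = rank(K) such that Γ_pr − K Kᵀ = ( Γ_pr⁻¹ + U Uᵀ )⁻¹. Conversely, for any real n×k matrix U there exists a real n×k matrix K with rank(K) = rank(U) such that ( Γ_pr⁻¹ + U Uᵀ )⁻¹ = Γ_pr − K Kᵀ (and in particular Γ_pr − K Kᵀ is positive definite). -/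
open Matrix

/-- Symmetric Woodbury identity with a rank-preserving factor. -/
theorem woodbury_factor {n k : ℕ} (A : Matrix (Fin n) (Fin n) ℝ) (hA : A.PosDef)
    (U : Matrix (Fin n) (Fin k) ℝ) :
    ∃ K : Matrix (Fin n) (Fin k) ℝ, K.rank = U.rank ∧ (A + U * Uᵀ)⁻¹ = A⁻¹ - K * Kᵀ := by
  have hAi : (A⁻¹).PosDef := hA.inv
  have hS : (1 + Uᵀ * A⁻¹ * U).PosDef := by
    refine Matrix.PosDef.one.add_posSemidef ?_
    have := hAi.posSemidef.conjTranspose_mul_mul_same U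
    simpa [conjTranspose_eq_transpose_of_trivial] using this
  have hT := hS.inv
  obtain ⟨B, hB⟩ : ∃ B : Matrix (Fin k) (Fin k) ℝ, (1 + Uᵀ * A⁻¹ * U)⁻¹ = B * Bᵀ := by
    open scoped MatrixOrder in
    obtain ⟨B, hB⟩ := CStarAlgebra.nonneg_iff_eq_star_mul_self.mp hT.posSemidef.nonneg
    refine ⟨Bᵀ, ?_⟩
    simpa [star_eq_conjTranspose, conjTranspose_eq_transpose_of_trivial] using hB
  have hBu : IsUnit B.det := by
    have h := (Matrix.isUnit_iff_isUnit_det _).mp hT.isUnit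
    rw [hB, det_mul] at h
    exact isUnit_of_mul_isUnit_left h
  have hsym : (A⁻¹)ᵀ = A⁻¹ := by
    simpa [conjTranspose_eq_transpose_of_trivial] using hAi.isHermitian.eq
  refine ⟨A⁻¹ * U * B, ?_, ?_⟩
  · rw [rank_mul_eq_left_of_isUnit_det _ _ hBu, rank_mul_eq_right_of_isUnit_det]
    exact (Matrix.isUnit_iff_isUnit_det _).mp hAi.isUnit
  · have h := Matrix.add_mul_mul_inv_eq_sub A U 1 Uᵀ hA.isUnit isUnit_one
      (by simpa using hS.isUnit)
    simp only [Matrix.mul_one, inv_one] at h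
    rw [h, hB, transpose_mul, transpose_mul, hsym]
    simp only [Matrix.mul_assoc]

/-- Lemma A.2 (prior updates): every positive definite negative semidefinite update
`Γpr − K Kᵀ` of the prior can be written as `(Γpr⁻¹ + U Uᵀ)⁻¹` with `rank U = rank K`,
and conversely. -/
theorem prior_updates_bijection
    (n k : ℕ) (hn : 0 < n) (hk : 0 < k)
    (Γpr : Matrix (Fin n) (Fin n) ℝ) (hpr : Γpr.PosDef) :
    (∀ K : Matrix (Fin n) (Fin k) ℝ, (Γpr - K * Kᵀ).PosDef →
      ∃ U : Matrix (Fin n) (Fin k) ℝ, U.rank = K.rank ∧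
        Γpr - K * Kᵀ = (Γpr⁻¹ + U * Uᵀ)⁻¹) ∧
    (∀ U : Matrix (Fin n) (Fin k) ℝ,
      ∃ K : Matrix (Fin n) (Fin k) ℝ, K.rank = U.rank ∧
        (Γpr⁻¹ + U * Uᵀ)⁻¹ = Γpr - K * Kᵀ ∧ (Γpr - K * Kᵀ).PosDef) := by
  have inv2 : ∀ M : Matrix (Fin n) (Fin n) ℝ, M.PosDef → M⁻¹⁻¹ = M := fun M hM =>
    Matrix.nonsing_inv_nonsing_inv _ ((Matrix.isUnit_iff_isUnit_det _).mp hM.isUnit)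
  refine ⟨fun K hK => ?_, fun U => ?_⟩
  · obtain ⟨U, hU, h⟩ := woodbury_factor _ hK K
    refine ⟨U, hU, ?_⟩
    rw [sub_add_cancel] at h
    rw [h, sub_add_cancel, inv2 _ hK]
  · obtain ⟨K, hK, h⟩ := woodbury_factor _ hpr.inv U
    rw [inv2 _ hpr] at h
    refine ⟨K, hK, h, ?_⟩
    rw [← h]
    refine (hpr.inv.add_posSemidef ?_).inv
    simpa [conjTranspose_eq_transpose_of_trivial] using
      Matrix.posSemidef_self_mul_conjTranspose U
end

section
/- Let S_pr and S_obs be invertible matrices with Γ_pr = S_pr S_prᵀ and Γ_obs = S_obs S_obsᵀ, and let W D Vᵀ be a singular value decomposition of the n×m matrix S_prᵀ Gᵀ S_obs⁻ᵀ (with W an n×n orthogonal matrix, V an m×m orthogonal matrix, and D an n×m matrix with the singular values on its diagonal). Then S_pos = S_pr W (I + D Dᵀ)^{−1/2} Wᵀ satisfies S_pos S_posᵀ = Γ_pos = (Gᵀ Γ_obs⁻¹ G + Γ_pr⁻¹)⁻¹, and S_y = S_obs V (I + Dᵀ D)^{1/2} Vᵀ satisfies S_y S_yᵀ = Γ_y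 = Γ_obs + G Γ_pr Gᵀ. -/
open Matrix

/-- Lemma A.3 (square roots): given factorizations `Γpr = Spr Sprᵀ`, `Γobs = Sobs Sobsᵀ`
and an SVD `Sprᵀ Gᵀ Sobs⁻ᵀ = W D Vᵀ`, the matrices
`Spos = Spr W (I + D Dᵀ)^{−1/2} Wᵀ` and `Sy = Sobs V (I + Dᵀ D)^{1/2} Vᵀ` are square roots
of the posterior covariance `Γpos` and the marginal data covariance `Γy`, respectively.
The symmetric positive semidefinite square roots `(I + D Dᵀ)^{1/2}` and `(I + Dᵀ D)^{1/2}`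
are encoded by quantifying over any positive semidefinite `R`, `Q` with `R R = I + D Dᵀ`
and `Q Q = I + Dᵀ D` (such square roots are unique). -/
theorem square_roots_of_posterior_and_marginal_covariance
    (n m : ℕ) (hn : 0 < n) (hm : 0 < m)
    (G : Matrix (Fin m) (Fin n) ℝ)
    (Γobs : Matrix (Fin m) (Fin m) ℝ) (hobs : Γobs.PosDef)
    (Γpr : Matrix (Fin n) (Fin n) ℝ) (hpr : Γpr.PosDef)
    (Γpos : Matrix (Fin n) (Fin n) ℝ)
    (hΓpos : Γpos = (Gᵀ * Γobs⁻¹ * G + Γpr⁻¹)⁻¹)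
    (Γy : Matrix (Fin m) (Fin m) ℝ)
    (hΓy : Γy = Γobs + G * Γpr * Gᵀ)
    (Spr : Matrix (Fin n) (Fin n) ℝ) (hSprInv : IsUnit Spr.det)
    (hSpr : Γpr = Spr * Sprᵀ)
    (Sobs : Matrix (Fin m) (Fin m) ℝ) (hSobsInv : IsUnit Sobs.det)
    (hSobs : Γobs = Sobs * Sobsᵀ)
    (W : Matrix (Fin n) (Fin n) ℝ) (hW : W * Wᵀ = 1) (hW' : Wᵀ * W = 1)
    (V : Matrix (Fin m) (Fin m) ℝ) (hV : V * Vᵀ = 1) (hV' : Vᵀ * V = 1)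
    (D : Matrix (Fin n) (Fin m) ℝ)
    (hDdiag : ∀ (i : Fin n) (j : Fin m), (i : ℕ) ≠ (j : ℕ) → D i j = 0)
    (hDnonneg : ∀ (i : Fin n) (j : Fin m), (i : ℕ) = (j : ℕ) → 0 ≤ D i j)
    (hsvd : Sprᵀ * Gᵀ * (Sobs⁻¹)ᵀ = W * D * Vᵀ) :
    ∀ R : Matrix (Fin n) (Fin n) ℝ, R.PosSemidef → R * R = 1 + D * Dᵀ →
    ∀ Q : Matrix (Fin m) (Fin m) ℝ, Q.PosSemidef → Q * Q = 1 + Dᵀ * D →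
      (Spr * W * R⁻¹ * Wᵀ) * (Spr * W * R⁻¹ * Wᵀ)ᵀ = Γpos ∧
      (Sobs * V * Q * Vᵀ) * (Sobs * V * Q * Vᵀ)ᵀ = Γy := by
  intro R hR hRR Q hQ hQQ
  have hRt : Rᵀ = R := by simpa using hR.isHermitian.eq
  have hQt : Qᵀ = Q := by simpa using hQ.isHermitian.eq
  have hWi : W⁻¹ = Wᵀ := Matrix.inv_eq_left_inv hW'
  have hWti : (Wᵀ)⁻¹ = W := Matrix.inv_eq_left_inv hW
  have hVc : ∀ X : Matrix (Fin m) (Fin m) ℝ, Vᵀ * (V * X) = X := fun X => by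
    rw [← Matrix.mul_assoc, hV', Matrix.one_mul]
  have hVcn : ∀ X : Matrix (Fin m) (Fin n) ℝ, Vᵀ * (V * X) = X := fun X => by
    rw [← Matrix.mul_assoc, hV', Matrix.one_mul]
  have hVd : ∀ X : Matrix (Fin m) (Fin m) ℝ, V * (Vᵀ * X) = X := fun X => by
    rw [← Matrix.mul_assoc, hV, Matrix.one_mul]
  have hWc : ∀ X : Matrix (Fin n) (Fin n) ℝ, Wᵀ * (W * X) = X := fun X => by
    rw [← Matrix.mul_assoc, hW', Matrix.one_mul]
  have hWcm : ∀ X : Matrix (Fin n) (Fin m) ℝ, Wᵀ * (W * X) = X := fun X => by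
    rw [← Matrix.mul_assoc, hW', Matrix.one_mul]
  have hWd : ∀ X : Matrix (Fin n) (Fin n) ℝ, W * (Wᵀ * X) = X := fun X => by
    rw [← Matrix.mul_assoc, hW, Matrix.one_mul]
  have hsvd2 : Sobs⁻¹ * G * Spr = V * Dᵀ * Wᵀ := by
    have h := congrArg Matrix.transpose hsvd
    simpa [Matrix.transpose_mul, Matrix.mul_assoc] using h
  have hG : G = Sobs * (V * Dᵀ * Wᵀ) * Spr⁻¹ := by
    rw [← hsvd2, Matrix.mul_assoc Sobs⁻¹, Matrix.mul_nonsing_inv_cancel_left _ _ hSobsInv,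
      Matrix.mul_nonsing_inv_cancel_right _ _ hSprInv]
  have hSt : IsUnit (Sprᵀ).det := by rwa [Matrix.det_transpose]
  have hOt : IsUnit (Sobsᵀ).det := by rwa [Matrix.det_transpose]
  constructor
  · have key : Gᵀ * Γobs⁻¹ * G + Γpr⁻¹ = (Sprᵀ)⁻¹ * W * (R * R) * Wᵀ * Spr⁻¹ := by
      have h1 : Sobs⁻¹ * G = V * Dᵀ * Wᵀ * Spr⁻¹ := by
        rw [hG, Matrix.mul_assoc Sobs, Matrix.nonsing_inv_mul_cancel_left _ _ hSobsInv]
      have h2 : Gᵀ * (Sobsᵀ)⁻¹ = (Sprᵀ)⁻¹ * W * D * Vᵀ := by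
        have h := congrArg Matrix.transpose h1
        simpa [Matrix.transpose_mul, Matrix.transpose_nonsing_inv, Matrix.mul_assoc] using h
      have h3 : Gᵀ * Γobs⁻¹ * G = (Gᵀ * (Sobsᵀ)⁻¹) * (Sobs⁻¹ * G) := by
        rw [hSobs, Matrix.mul_inv_rev]
        simp only [Matrix.mul_assoc]
      rw [h3, h1, h2, hRR, hSpr, Matrix.mul_inv_rev]
      simp only [Matrix.mul_assoc, Matrix.mul_add, Matrix.add_mul, Matrix.one_mul, hVcn, hWd]
      rw [add_comm]
    rw [hΓpos, key]
    simp only [Matrix.mul_inv_rev, Matrix.transpose_mul, Matrix.transpose_transpose, hWi, hWti,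
      Matrix.transpose_nonsing_inv, hRt, Matrix.nonsing_inv_nonsing_inv _ hSprInv,
      Matrix.nonsing_inv_nonsing_inv _ hSt, Matrix.mul_assoc, hWc]
  · have e : (Sobs * V * Q * Vᵀ) * (Sobs * V * Q * Vᵀ)ᵀ
        = Sobs * V * (Q * Q) * Vᵀ * Sobsᵀ := by
      simp only [Matrix.transpose_mul, Matrix.transpose_transpose, hQt, Matrix.mul_assoc, hVc]
    have h1 : G * Spr = Sobs * (V * Dᵀ * Wᵀ) := by
      rw [hG, Matrix.nonsing_inv_mul_cancel_right _ _ hSprInv]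
    have h2 : G * Γpr * Gᵀ = (G * Spr) * (G * Spr)ᵀ := by
      rw [hSpr, Matrix.transpose_mul]
      simp only [Matrix.mul_assoc]
    rw [e, hΓy, h2, h1, hQQ, hSobs]
    simp only [Matrix.transpose_mul, Matrix.transpose_transpose, Matrix.mul_assoc,
      Matrix.mul_add, Matrix.add_mul, Matrix.one_mul, hVd, hWcm]
end
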